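/- arXiv:1308.5276 — 2 statements merged into one kernel-verified Lean document; each statement's English description precedes it below -/
import Mathlib

section
/- Let P ∈ M_m(ℂ) be an m × m complex projection matrix (P = P* = P²) whose diagonal entries are each at most ε. Let r ∈ ℕ and suppose t_1, ..., t_r > 0 satisfy Σ_{j=1}^r t_j = 1. Then there exist r diagonal projections Q_1, ..., Q_r in M_m(ℂ) such that Σ_{j=1}^r Q_j = I and ‖P Q_j P‖ ≤ t_j (1 + √(rε))² for 1 ≤ j ≤ r. -/
open Matrix

/-- The diagonal projection matrix whose `i`-th diagonal entry is `1` exactly when `i ∈ S`. -/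
def diagProj {m : ℕ} (S : Finset (Fin m)) : Matrix (Fin m) (Fin m) ℂ :=
  Matrix.diagonal fun i => if i ∈ S then 1 else 0

/-- The operator norm of a matrix, acting on Euclidean space. -/
noncomputable def opNorm {m : ℕ} (A : Matrix (Fin m) (Fin m) ℂ) : ℝ :=
  ‖Matrix.toEuclideanCLM (𝕜 := ℂ) A‖
open Polynomial in
lemma KS_local0 (A B : ℝ[X]) (ρ : ℝ) (n : ℕ) (hA : A.eval ρ ≠ 0)
    (e : ℂ) (he : 0 < e.im) (h : 0 < (((B.eval ρ / A.eval ρ : ℝ) : ℂ) / e ^ n).im) :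
    ∃ τ : ℂ, 0 < τ.im ∧ 0 < (aeval ((ρ : ℂ) + τ) B / (τ ^ n * aeval ((ρ : ℂ) + τ) A)).im := by
  have e0 : e ≠ 0 := by rintro rfl; simp at he
  have hcont : ContinuousAt (fun η : ℝ => (aeval ((ρ : ℂ) + η * e) B / (e ^ n * aeval ((ρ : ℂ) + η * e) A)).im) 0 := by
    apply Complex.continuous_im.continuousAt.comp
    apply ContinuousAt.div
    · apply Continuous.continuousAt; fun_prop
    · apply Continuous.continuousAt; fun_prop
    · simp only [Complex.ofReal_zero, zero_mul, add_zero, ne_eq, mul_eq_zero, pow_eq_zero_iff', e0, false_and, false_or]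
      rw [← Complex.coe_algebraMap, aeval_algebraMap_apply]
      simpa using hA
  have h0 : 0 < (aeval ((ρ : ℂ) + ((0:ℝ):ℂ) * e) B / (e ^ n * aeval ((ρ : ℂ) + ((0:ℝ):ℂ) * e) A)).im := by
    simp only [Complex.ofReal_zero, zero_mul, add_zero]
    rw [← Complex.coe_algebraMap, aeval_algebraMap_apply, aeval_algebraMap_apply]
    simp only [coe_aeval_eq_eval, Complex.coe_algebraMap]
    rw [mul_comm, ← div_div]
    simpa using h
  have hev := hcont.eventually (lt_mem_nhds h0)
  obtain ⟨r, hr, hball⟩ := Metric.eventually_nhds_iff.1 hev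
  have h2 := hball (y := r / 2) (by simp [abs_of_pos hr]; linarith)
  refine ⟨((r / 2 : ℝ) : ℂ) * e, ?_, ?_⟩
  · rw [Complex.im_ofReal_mul]; positivity
  · rw [mul_pow, mul_assoc, div_mul_eq_div_div_swap, ← Complex.ofReal_pow, Complex.div_ofReal_im]
    positivity

lemma KS_exists_e (n : ℕ) (hn : 2 ≤ n) (C : ℝ) (hC : C ≠ 0) :
    ∃ e : ℂ, 0 < e.im ∧ 0 < ((C : ℂ) / e ^ n).im := by
  have hn' : (2:ℝ) ≤ n := by exact_mod_cast hn
  have key : ∀ θ : ℝ, (Complex.exp (θ * Complex.I)).im = Real.sin θ := by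
    intro θ; rw [Complex.exp_ofReal_mul_I_im]
  have npos : (n:ℂ) ≠ 0 := by
    have : n ≠ 0 := by omega
    exact_mod_cast this
  have hpi := Real.pi_pos
  rcases lt_or_gt_of_ne hC with h | h
  · refine ⟨Complex.exp ((Real.pi / (2 * n) : ℝ) * Complex.I), ?_, ?_⟩
    · rw [key]
      apply Real.sin_pos_of_pos_of_lt_pi (by positivity)
      rw [div_lt_iff₀ (by positivity)]; nlinarith
    · rw [← Complex.exp_nat_mul]
      have : (n : ℂ) * (((Real.pi / (2 * n) : ℝ) : ℂ) * Complex.I) = (Real.pi / 2 : ℂ) * Complex.I := by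
        push_cast; field_simp
      rw [this, Complex.exp_pi_div_two_mul_I]
      simp [h]
  · refine ⟨Complex.exp ((3 * Real.pi / (2 * n) : ℝ) * Complex.I), ?_, ?_⟩
    · rw [key]
      apply Real.sin_pos_of_pos_of_lt_pi (by positivity)
      rw [div_lt_iff₀ (by positivity)]; nlinarith
    · rw [← Complex.exp_nat_mul]
      have : (n : ℂ) * (((3 * Real.pi / (2 * n) : ℝ) : ℂ) * Complex.I) = (Real.pi : ℂ) * Complex.I + (Real.pi / 2 : ℂ) * Complex.I := by
        push_cast; field_simp; ring
      rw [this, Complex.exp_add, Complex.exp_pi_div_two_mul_I, Complex.exp_pi_mul_I,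
        neg_one_mul, div_neg, Complex.div_I]
      simp [h]

open Polynomial in
lemma KS_local2 (A B : ℝ[X]) (ρ : ℝ) (n : ℕ) (hn : 2 ≤ n) (hA : A.eval ρ ≠ 0) (hB : B.eval ρ ≠ 0) :
    ∃ τ : ℂ, 0 < τ.im ∧ 0 < (aeval ((ρ : ℂ) + τ) B / (τ ^ n * aeval ((ρ : ℂ) + τ) A)).im := by
  obtain ⟨e, he, h⟩ := KS_exists_e n hn (B.eval ρ / A.eval ρ) (div_ne_zero hB hA)
  exact KS_local0 A B ρ n hA e he h

open Polynomial in
lemma KS_local1 (A B : ℝ[X]) (ρ : ℝ) (hA : A.eval ρ ≠ 0)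
    (h : ∀ τ : ℂ, 0 < τ.im → (aeval ((ρ : ℂ) + τ) B / (τ * aeval ((ρ : ℂ) + τ) A)).im ≤ 0) :
    0 ≤ B.eval ρ / A.eval ρ := by
  by_contra hneg
  push Not at hneg
  obtain ⟨τ, h1, h2⟩ := KS_local0 A B ρ 1 hA Complex.I (by simp) (by
    rw [pow_one, Complex.div_I]; simp only [Complex.neg_im, Complex.mul_im, Complex.ofReal_re, Complex.ofReal_im, Complex.I_re, Complex.I_im]; linarith)
  have := h τ h1
  rw [pow_one] at h2
  linarith
open Polynomial in
lemma KS_aeval_reverse (a : ℝ[X]) (s : ℂ) (hs : s ≠ 0) :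
    aeval s a = aeval (s⁻¹) a.reverse * s ^ a.natDegree := by
  let _ : Invertible s := invertibleOfNonzero hs
  have := eval₂_reverse_mul_pow (algebraMap ℝ ℂ) s a
  rw [invOf_eq_inv] at this
  exact this.symm

open Polynomial in
lemma KS_aeval_conj (a : ℝ[X]) (s : ℂ) :
    aeval (starRingEnd ℂ s) a = starRingEnd ℂ (aeval s a) := by
  exact aeval_conj a s

open Polynomial in
lemma KS_inf (a b : ℝ[X]) 
    (h : ∀ s : ℂ, 0 < s.im → (aeval s b / aeval s a).im ≤ 0) (k : ℕ) 
    (hdeg : b.natDegree = a.natDegree + k) (τ : ℂ) (hτ : 0 < τ.im) :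
     0 ≤ (aeval (((0:ℝ):ℂ) + τ) b.reverse / (τ ^ k * aeval (((0:ℝ):ℂ) + τ) a.reverse)).im := by
  have t0 : τ ≠ 0 := by rintro rfl; simp at hτ
  have := h (starRingEnd ℂ τ)⁻¹ (by
    rw [Complex.inv_im]
    apply div_pos
    · simpa using hτ
    · simpa [Complex.normSq_pos] using t0)
  have h0 : starRingEnd ℂ τ ≠ 0 := by simpa using t0
  rw [KS_aeval_reverse _ _ (inv_ne_zero h0), KS_aeval_reverse a _ (inv_ne_zero h0), inv_inv,
    KS_aeval_conj, KS_aeval_conj, hdeg, pow_add] at this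
  have e : (starRingEnd ℂ) ((aeval τ) b.reverse) *
          (((starRingEnd ℂ) τ)⁻¹ ^ a.natDegree * ((starRingEnd ℂ) τ)⁻¹ ^ k) /
        ((starRingEnd ℂ) ((aeval τ) a.reverse) * ((starRingEnd ℂ) τ)⁻¹ ^ a.natDegree) = 
      starRingEnd ℂ (aeval (((0:ℝ):ℂ) + τ) b.reverse / (τ ^ k * aeval (((0:ℝ):ℂ) + τ) a.reverse)) := by
    simp only [Complex.ofReal_zero, zero_add, map_div₀, map_mul, map_pow]
    by_cases hz : (starRingEnd ℂ) ((aeval τ) a.reverse) = 0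
    · rw [hz]; simp
    · rw [inv_pow, inv_pow]; field_simp
  rw [e, Complex.conj_im] at this
  linarith

open Polynomial in
lemma KS_quot (a b : ℝ[X]) (ha0 : a ≠ 0) 
    (h : ∀ s : ℂ, 0 < s.im → (aeval s b / aeval s a).im ≤ 0) :
    ∃ k d : ℝ, 0 ≤ k ∧ b / a = C d - C k * X := by
  by_cases hb0 : b = 0
  · exact ⟨0, 0, le_rfl, by simp [hb0]⟩
  have hqd : a.natDegree ≤ b.natDegree → a.natDegree + (b / a).natDegree = b.natDegree := by
    intro hle
    have hd := degree_add_div (p := b) ha0 (by rw [degree_eq_natDegree ha0, degree_eq_natDegree hb0]; exact_mod_cast hle)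
    have hne : b / a ≠ 0 := by
      intro h0
      rw [h0, degree_zero, WithBot.add_bot] at hd
      exact hb0 (degree_eq_bot.1 hd.symm)
    rw [degree_eq_natDegree ha0, degree_eq_natDegree hb0, degree_eq_natDegree hne] at hd
    exact_mod_cast hd
  have ra : a.reverse.eval 0 ≠ 0 := by
    rw [← coeff_zero_eq_eval_zero, coeff_zero_reverse]; simpa using ha0
  have rb : b.reverse.eval 0 ≠ 0 := by
    rw [← coeff_zero_eq_eval_zero, coeff_zero_reverse]; simpa using hb0
  have hle : b.natDegree ≤ a.natDegree + 1 := by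
    by_contra hcon
    push Not at hcon
    obtain ⟨k, hk⟩ := Nat.exists_eq_add_of_le (show a.natDegree ≤ b.natDegree by omega)
    obtain ⟨τ, h1, h2⟩ := KS_local2 a.reverse (-b.reverse) 0 k (by omega) ra (by simpa using rb)
    have h3 := KS_inf a b h k hk τ h1
    rw [map_neg, neg_div, Complex.neg_im] at h2
    linarith
  rcases Nat.lt_trichotomy a.natDegree b.natDegree with hlt | hge | hgt
  · have hk : b.natDegree = a.natDegree + 1 := by omega
    have hq1 : (b / a).natDegree = 1 := by have := hqd hlt.le; omega
    have h3 := KS_local1 a.reverse (-b.reverse) 0 ra (fun τ hτ => by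
      have := KS_inf a b h 1 hk τ hτ
      rw [pow_one] at this
      rw [map_neg, neg_div, Complex.neg_im]
      linarith)
    refine ⟨-(b / a).coeff 1, (b / a).coeff 0, ?_, ?_⟩
    · have : (b / a).coeff 1 = b.leadingCoeff / a.leadingCoeff := by
        rw [← leadingCoeff_div (by rw [degree_eq_natDegree ha0, degree_eq_natDegree hb0]; exact_mod_cast hlt.le),
          leadingCoeff, hq1]
      rw [this]
      rw [eval_neg, ← coeff_zero_eq_eval_zero, ← coeff_zero_eq_eval_zero, coeff_zero_reverse, coeff_zero_reverse, neg_div] at h3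
      exact h3
    · conv_lhs => rw [eq_X_add_C_of_natDegree_le_one hq1.le]
      simp; ring
  · refine ⟨0, (b / a).coeff 0, le_rfl, ?_⟩
    have : (b / a).natDegree = 0 := by have := hqd hge.le; omega
    conv_lhs => rw [eq_C_of_natDegree_eq_zero this]
    simp
  · refine ⟨0, 0, le_rfl, ?_⟩
    rw [(Polynomial.div_eq_zero_iff ha0).2 (by rw [degree_eq_natDegree ha0, degree_eq_natDegree hb0]; exact_mod_cast hgt)]
    simp

open Polynomial in
theorem KS_rep_coprime (a b : ℝ[X]) (hs : a.Splits) (ha0 : a ≠ 0) (hab : IsCoprime a b)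
    (h : ∀ s : ℂ, 0 < s.im → (aeval s b / aeval s a).im ≤ 0) :
    ∃ (S : Finset ℝ) (c : ℝ → ℝ) (k d : ℝ), 0 ≤ k ∧ (∀ ρ ∈ S, a.eval ρ = 0 ∧ 0 ≤ c ρ) ∧
      ∀ s : ℝ, a.eval s ≠ 0 → b.eval s / a.eval s = d - k * s + ∑ ρ ∈ S, c ρ / (s - ρ) := by
  have hbr : ∀ ρ, a.eval ρ = 0 → b.eval ρ ≠ 0 := by
    intro ρ h1 h2
    obtain ⟨u, v, huv⟩ := hab
    have := congrArg (eval ρ) huv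
    simp [h1, h2] at this
  have hroot : ∀ ρ, a.eval ρ = 0 → a.rootMultiplicity ρ ≤ 1 ∧ 0 ≤ b.eval ρ / a.derivative.eval ρ := by
    intro ρ hρ
    obtain ⟨A, hA, hAd⟩ := exists_eq_pow_rootMultiplicity_mul_and_not_dvd a ha0 ρ
    set n := a.rootMultiplicity ρ with hn
    have hA0 : A.eval ρ ≠ 0 := by
      intro h0; exact hAd (dvd_iff_isRoot.2 h0)
    have hev : ∀ τ : ℂ, aeval ((ρ : ℂ) + τ) a = τ ^ n * aeval ((ρ : ℂ) + τ) A := by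
      intro τ; rw [hA]; simp
    have hn1 : n ≤ 1 := by
      by_contra hcon
      push Not at hcon
      obtain ⟨τ, h1, h2⟩ := KS_local2 A b ρ n hcon hA0 (hbr ρ hρ)
      rw [← hev] at h2
      have := h (ρ + τ) (by simpa using h1)
      linarith
    refine ⟨hn1, ?_⟩
    have hnpos : 0 < n := (rootMultiplicity_pos ha0).2 hρ
    have hn1' : n = 1 := by omega
    rw [hn1', pow_one] at hA
    have hder : a.derivative.eval ρ = A.eval ρ := by
      rw [hA]; simp
    rw [hder]
    apply KS_local1 A b ρ hA0
    intro τ hτ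
    have h2 := hev τ
    rw [hn1', pow_one] at h2
    rw [← h2]
    exact h _ (by simpa using hτ)
  have hnodup : a.roots.Nodup := by
    rw [Multiset.nodup_iff_count_le_one]
    intro ρ
    rw [count_roots]
    by_cases hρ : a.eval ρ = 0
    · exact (hroot ρ hρ).1
    · rw [rootMultiplicity_eq_zero hρ]; omega
  set S := a.roots.toFinset with hS
  have hSa : a = C a.leadingCoeff * Lagrange.nodal S id := by
    conv_lhs => rw [hs.eq_prod_roots]
    congr 1
    rw [Lagrange.nodal, Finset.prod, hS, Multiset.toFinset_val, hnodup.dedup]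
    rfl
  have hl : a.leadingCoeff ≠ 0 := by simpa using ha0
  obtain ⟨k, d, hk, hq⟩ := KS_quot a b ha0 h
  refine ⟨S, fun ρ => b.eval ρ / a.derivative.eval ρ, k, d, hk, ?_, ?_⟩
  · intro ρ hρ
    have : a.eval ρ = 0 := by
      rw [hS, Multiset.mem_toFinset, mem_roots ha0] at hρ; exact hρ
    exact ⟨this, (hroot ρ this).2⟩
  · intro s hs0
    have hdm := EuclideanDomain.div_add_mod b a
    have hcard : a.degree = S.card := by
      conv_lhs => rw [hSa]
      rw [degree_C_mul hl, Lagrange.degree_nodal]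
    have hLag := Lagrange.eq_interpolate (s := S) (v := id) (f := b % a) (Set.injOn_id _) (by
      rw [← hcard]; exact degree_mod_lt b ha0)
    have hev := congrArg (eval s) hLag
    rw [Lagrange.eval_interpolate_not_at_node] at hev
    swap
    · rintro ρ hρ rfl
      rw [hS, Multiset.mem_toFinset, mem_roots ha0] at hρ
      exact hs0 hρ
    have hbs : b.eval s = a.eval s * (d - k * s) + (b % a).eval s := by
      conv_lhs => rw [← hdm]
      rw [hq]; simp
    have han : a.eval s = a.leadingCoeff * (Lagrange.nodal S id).eval s := by
      conv_lhs => rw [hSa]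
      simp
    have hns : (Lagrange.nodal S id).eval s ≠ 0 := by
      intro h0; rw [h0, mul_zero] at han; exact hs0 han
    rw [hbs, hev, add_div, mul_div_cancel_left₀ _ hs0]
    congr 1
    rw [han, mul_comm a.leadingCoeff, mul_div_mul_left _ _ hns, Finset.sum_div]
    apply Finset.sum_congr rfl
    intro ρ hρ
    have hρ0 : a.eval ρ = 0 := by
      rw [hS, Multiset.mem_toFinset, mem_roots ha0] at hρ; exact hρ
    rw [Lagrange.nodalWeight_eq_eval_derivative_nodal hρ]
    have e1 : (b % a).eval ρ = b.eval ρ := by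
      conv_rhs => rw [← hdm]
      simp [hρ0]
    have e2 : a.derivative.eval ρ = a.leadingCoeff * (Lagrange.nodal S id).derivative.eval ρ := by
      conv_lhs => rw [hSa]
      simp
    simp only [id] at *
    rw [e1, e2]
    field_simp

open Polynomial in
theorem KS_rep (a b : ℝ[X]) (hs : a.Splits) (ha0 : a ≠ 0)
    (h : ∀ s : ℂ, 0 < s.im → (aeval s b / aeval s a).im ≤ 0) :
    ∃ (S : Finset ℝ) (c : ℝ → ℝ) (k d : ℝ), 0 ≤ k ∧ (∀ ρ ∈ S, a.eval ρ = 0 ∧ 0 ≤ c ρ) ∧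
      ∀ s : ℝ, a.eval s ≠ 0 → b.eval s / a.eval s = d - k * s + ∑ ρ ∈ S, c ρ / (s - ρ) := by
  classical
  set g := EuclideanDomain.gcd a b with hg
  have hg0 : g ≠ 0 := by
    intro h0; exact ha0 (EuclideanDomain.gcd_eq_zero_iff.1 h0).1
  obtain ⟨a', ha'⟩ := EuclideanDomain.gcd_dvd_left a b
  obtain ⟨b', hb'⟩ := EuclideanDomain.gcd_dvd_right a b
  rw [← hg] at ha' hb'
  have hcop : IsCoprime a' b' := by
    have := EuclideanDomain.gcd_eq_gcd_ab a b
    rw [← hg] at this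
    refine ⟨EuclideanDomain.gcdA a b, EuclideanDomain.gcdB a b, ?_⟩
    apply mul_left_cancel₀ hg0
    rw [mul_one]
    calc _ = (g * a') * EuclideanDomain.gcdA a b + (g * b') * EuclideanDomain.gcdB a b := by ring
      _ = g := by rw [← ha', ← hb']; exact this.symm
  have ha0' : a' ≠ 0 := by rintro rfl; simp at ha'; exact ha0 ha'
  have hs' : a'.Splits := hs.of_dvd ha0 ⟨g, by rw [mul_comm]; exact ha'⟩
  have h' : ∀ s : ℂ, 0 < s.im → (aeval s b' / aeval s a').im ≤ 0 := by
    intro s hsi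
    have := h s hsi
    have hgs : aeval s g ≠ 0 := by
      intro h0
      have h1 : (a.map (algebraMap ℝ ℂ)).IsRoot s := by
        rw [IsRoot.def, eval_map_algebraMap, ha', map_mul, h0, zero_mul]
      obtain ⟨x, hx⟩ := hs.mem_range_of_isRoot ha0 h1
      rw [← hx] at hsi
      simp at hsi
    rw [ha', hb', map_mul, map_mul, mul_div_mul_left _ _ hgs] at this
    exact this
  obtain ⟨S, c, k, d, hk, hS, hf⟩ := KS_rep_coprime a' b' hs' ha0' hcop h'
  refine ⟨S, c, k, d, hk, ?_, ?_⟩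
  · intro ρ hρ
    refine ⟨?_, (hS ρ hρ).2⟩
    rw [ha', eval_mul, (hS ρ hρ).1, mul_zero]
  · intro s hs0
    rw [ha', eval_mul] at hs0
    rw [← hf s (right_ne_zero_of_mul hs0)]
    rw [ha', hb', eval_mul, eval_mul, mul_div_mul_left _ _ (left_ne_zero_of_mul hs0)]
open Polynomial in
theorem KS_uni (a b : ℝ[X]) (hs : a.Splits)
    (h : ∀ s : ℂ, 0 < s.im → (aeval s b / aeval s a).im ≤ 0)
    (hpos : ∀ s : ℝ, 0 ≤ s → 0 < a.eval s) (δ : ℝ) (hδ : 0 ≤ δ) :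
    b.eval δ / a.eval δ ≤ b.eval 0 / a.eval 0 ∧
    b.derivative.eval δ * a.eval δ - b.eval δ * a.derivative.eval δ ≤ 0 ∧
    0 ≤ b.eval 0 / a.eval 0 - b.eval δ / a.eval δ +
      δ * ((b.derivative.eval δ * a.eval δ - b.eval δ * a.derivative.eval δ) / a.eval δ ^ 2) := by
  have ha0 : a ≠ 0 := by rintro rfl; simpa using hpos 0 le_rfl
  obtain ⟨S, c, k, d, hk, hS, hf⟩ := KS_rep a b hs ha0 h
  have hSneg : ∀ ρ ∈ S, ρ < 0 := by
    intro ρ hρ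
    by_contra hcon
    push Not at hcon
    have := hpos ρ hcon
    rw [(hS ρ hρ).1] at this
    exact lt_irrefl _ this
  have hap := hpos δ hδ
  have hd1 : HasDerivAt (fun s => b.eval s / a.eval s)
      ((b.derivative.eval δ * a.eval δ - b.eval δ * a.derivative.eval δ) / a.eval δ ^ 2) δ :=
    (b.hasDerivAt δ).div (a.hasDerivAt δ) hap.ne'
  have hd2 : HasDerivAt (fun s => d - k * s + ∑ ρ ∈ S, c ρ / (s - ρ))
      (- k + ∑ ρ ∈ S, -(c ρ / (δ - ρ) ^ 2)) δ := by
    apply HasDerivAt.add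
    · simpa using ((hasDerivAt_id δ).const_mul k).const_sub d
    · apply HasDerivAt.fun_sum
      intro ρ hρ
      have hne : δ - ρ ≠ 0 := by have := hSneg ρ hρ; linarith
      have := (hasDerivAt_const δ (c ρ)).div ((hasDerivAt_id δ).sub_const ρ) hne
      have e : -(c ρ / (δ - ρ) ^ 2) = (0 * (id δ - ρ) - c ρ * 1) / (id δ - ρ) ^ 2 := by
        simp only [id]; ring
      rw [e]
      exact this
  have heq : (fun s => b.eval s / a.eval s) =ᶠ[nhds δ] (fun s => d - k * s + ∑ ρ ∈ S, c ρ / (s - ρ)) := by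
    have : ∀ᶠ s in nhds δ, a.eval s ≠ 0 := a.continuous.continuousAt.eventually_ne hap.ne'
    filter_upwards [this] with s hs
    exact hf s hs
  have hder := hd1.unique (hd2.congr_of_eventuallyEq heq)
  have hnp : (b.derivative.eval δ * a.eval δ - b.eval δ * a.derivative.eval δ) / a.eval δ ^ 2 ≤ 0 := by
    rw [hder]
    have : ∑ ρ ∈ S, -(c ρ / (δ - ρ) ^ 2) ≤ 0 := by
      apply Finset.sum_nonpos
      intro ρ hρ
      have := (hS ρ hρ).2
      have : 0 ≤ c ρ / (δ - ρ) ^ 2 := by positivity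
      linarith
    linarith
  have h3 : 0 ≤ b.eval 0 / a.eval 0 - b.eval δ / a.eval δ +
      δ * ((b.derivative.eval δ * a.eval δ - b.eval δ * a.derivative.eval δ) / a.eval δ ^ 2) := by
    rw [hder, hf 0 (hpos 0 le_rfl).ne', hf δ hap.ne']
    have : d - k * 0 + ∑ ρ ∈ S, c ρ / (0 - ρ) - (d - k * δ + ∑ ρ ∈ S, c ρ / (δ - ρ)) +
        δ * (-k + ∑ ρ ∈ S, -(c ρ / (δ - ρ) ^ 2)) =
        ∑ ρ ∈ S, (c ρ / (0 - ρ) - c ρ / (δ - ρ) + δ * (-(c ρ / (δ - ρ) ^ 2))) := by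
      rw [Finset.sum_add_distrib, Finset.sum_sub_distrib, ← Finset.mul_sum]
      ring
    rw [this]
    apply Finset.sum_nonneg
    intro ρ hρ
    have h1 := hSneg ρ hρ
    have h2 := (hS ρ hρ).2
    have e : c ρ / (0 - ρ) - c ρ / (δ - ρ) + δ * (-(c ρ / (δ - ρ) ^ 2)) =
        c ρ * δ ^ 2 / ((-ρ) * (δ - ρ) ^ 2) := by
      have : δ - ρ ≠ 0 := by linarith
      have : -ρ ≠ 0 := by linarith
      have : ρ ≠ 0 := by linarith
      rw [zero_sub]
      field_simp
      ring
    rw [e]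
    have : 0 < -ρ := by linarith
    positivity
  refine ⟨?_, ?_, h3⟩
  · have : δ * ((b.derivative.eval δ * a.eval δ - b.eval δ * a.derivative.eval δ) / a.eval δ ^ 2) ≤ 0 :=
      mul_nonpos_of_nonneg_of_nonpos hδ hnp
    linarith
  · have hsq : 0 < a.eval δ ^ 2 := by positivity
    by_contra hcon
    push Not at hcon
    have := div_pos hcon hsq
    linarith
/-- Directional derivative of a multivariate polynomial. -/
noncomputable def KS_D {σ : Type} [Fintype σ] (u : σ → ℝ) (p : MvPolynomial σ ℝ) : MvPolynomial σ ℝ :=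
  ∑ i, MvPolynomial.C (u i) * MvPolynomial.pderiv i p

/-- Restriction of a multivariate polynomial to a line. -/
noncomputable def KS_line {σ : Type} {K : Type} [Field K] [Algebra ℝ K]
    (p : MvPolynomial σ ℝ) (w v : σ → K) : Polynomial K :=
  MvPolynomial.aeval (fun i => Polynomial.C (w i) + Polynomial.C (v i) * Polynomial.X) p

section
set_option linter.unusedSectionVars false
variable {σ : Type} [Fintype σ] {K : Type} [Field K] [Algebra ℝ K]

lemma KS_line_eval (p : MvPolynomial σ ℝ) (w v : σ → K) (y : K) :
    (KS_line p w v).eval y = MvPolynomial.aeval (fun i => w i + v i * y) p := by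
  have := MvPolynomial.comp_aeval_apply (fun i => Polynomial.C (w i) + Polynomial.C (v i) * Polynomial.X)
    ((Polynomial.aeval (R := K) y).restrictScalars ℝ) p
  simp only [AlgHom.restrictScalars_apply, Polynomial.coe_aeval_eq_eval] at this
  rw [KS_line, this]
  simp

lemma KS_line_aeval (p : MvPolynomial σ ℝ) (z v : σ → ℝ) (s : ℂ) :
    Polynomial.aeval s (KS_line p z v) = MvPolynomial.aeval (fun i => (z i : ℂ) + v i * s) p := by
  rw [KS_line, MvPolynomial.comp_aeval_apply]
  simp

lemma KS_line_derivative (p : MvPolynomial σ ℝ) (w v : σ → K) :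
    Polynomial.derivative (KS_line p w v) =
      ∑ i, Polynomial.C (v i) * KS_line (MvPolynomial.pderiv i p) w v := by
  classical
  induction p using MvPolynomial.induction_on with
  | C a =>
    simp [KS_line]
  | add p q hp hq =>
    simp only [KS_line, map_add] at *
    rw [hp, hq, ← Finset.sum_add_distrib]
    simp only [mul_add]
  | mul_X p j hp =>
    simp only [KS_line, map_mul, MvPolynomial.aeval_X, Polynomial.derivative_mul, Derivation.leibniz,
      MvPolynomial.pderiv_X, smul_eq_mul, map_add] at *
    rw [hp]
    have : ∀ i, Polynomial.C (v i) * (MvPolynomial.aeval (fun i => Polynomial.C (w i) + Polynomial.C (v i) * Polynomial.X) p *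
        MvPolynomial.aeval (fun i => Polynomial.C (w i) + Polynomial.C (v i) * Polynomial.X) (Pi.single (M := fun _ => MvPolynomial σ ℝ) i 1 j)) =
        if i = j then Polynomial.C (v j) * MvPolynomial.aeval (fun i => Polynomial.C (w i) + Polynomial.C (v i) * Polynomial.X) p else 0 := by
      intro i
      by_cases hij : i = j
      · subst hij; simp
      · simp [hij, Ne.symm hij]
    simp only [mul_add, Finset.sum_add_distrib, this]
    rw [Finset.sum_ite_eq' Finset.univ j]
    have e2 : ∀ i, Polynomial.C (v i) * ((Polynomial.C (w j) + Polynomial.C (v j) * Polynomial.X) *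
        MvPolynomial.aeval (fun i => Polynomial.C (w i) + Polynomial.C (v i) * Polynomial.X) (MvPolynomial.pderiv i p)) =
        (Polynomial.C (v i) * MvPolynomial.aeval (fun i => Polynomial.C (w i) + Polynomial.C (v i) * Polynomial.X)
          (MvPolynomial.pderiv i p)) * (Polynomial.C (w j) + Polynomial.C (v j) * Polynomial.X) := by
      intro i; ring
    simp only [← mul_add, e2, ← Finset.sum_mul]
    simp
    ring
    
lemma KS_aeval_D (u : σ → ℝ) (p : MvPolynomial σ ℝ) (w : σ → K) :
    MvPolynomial.aeval w (KS_D u p) = ∑ i, algebraMap ℝ K (u i) * MvPolynomial.aeval w (MvPolynomial.pderiv i p) := by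
  simp [KS_D]

lemma KS_line_derivative_eval (p : MvPolynomial σ ℝ) (w : σ → K) (u : σ → ℝ) (y : K) :
    (Polynomial.derivative (KS_line p w (fun i => algebraMap ℝ K (u i)))).eval y =
      (KS_line (KS_D u p) w (fun i => algebraMap ℝ K (u i))).eval y := by
  rw [KS_line_derivative, Polynomial.eval_finsetSum, KS_line_eval, KS_aeval_D]
  simp [KS_line_eval]

lemma KS_D_comm (u v : σ → ℝ) (p : MvPolynomial σ ℝ) : KS_D u (KS_D v p) = KS_D v (KS_D u p) := by
  simp only [KS_D, map_sum, Derivation.leibniz, MvPolynomial.pderiv_C, smul_eq_mul, mul_zero, add_zero,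
    Finset.mul_sum]
  rw [Finset.sum_comm]
  refine Finset.sum_congr rfl fun i _ => Finset.sum_congr rfl fun j _ => ?_
  have : MvPolynomial.pderiv j (MvPolynomial.pderiv i p) = MvPolynomial.pderiv i (MvPolynomial.pderiv j p) := by
    have h0 : ⁅MvPolynomial.pderiv (R := ℝ) j, MvPolynomial.pderiv (R := ℝ) i⁆ =
        (0 : Derivation ℝ (MvPolynomial σ ℝ) (MvPolynomial σ ℝ)) := by
      classical
      apply MvPolynomial.derivation_ext
      intro k
      rw [Derivation.commutator_apply]
      simp only [MvPolynomial.pderiv_X, Pi.single_apply]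
      split_ifs <;> simp
    have h1 := congrArg (fun d => d p) h0
    simp only [Derivation.commutator_apply, Derivation.zero_apply] at h1
    exact sub_eq_zero.1 h1
  rw [this]; ring
end
/-- Stability: no zeros in the product of open upper half planes. -/
def KS_Stable {σ : Type} (p : MvPolynomial σ ℝ) : Prop :=
  ∀ w : σ → ℂ, (∀ i, 0 < (w i).im) → MvPolynomial.aeval w p ≠ 0

/-- The points above the roots of `p`. -/
def KS_Ab {σ : Type} (p : MvPolynomial σ ℝ) (z : σ → ℝ) : Prop :=
  ∀ y : σ → ℝ, (∀ i, z i ≤ y i) → 0 < MvPolynomial.eval y p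

/-- The barrier function. -/
noncomputable def KS_Phi {σ : Type} [Fintype σ] (u : σ → ℝ) (p : MvPolynomial σ ℝ) (z : σ → ℝ) : ℝ :=
  MvPolynomial.eval z (KS_D u p) / MvPolynomial.eval z p

section
set_option linter.unusedSectionVars false
variable {σ : Type} [Fintype σ]

lemma KS_multiset_im (M : Multiset ℂ) (h : ∀ y ∈ M, y.im < 0) :
    M = 0 ∨ (M.map fun z => 1 / ((0 : ℂ) - z)).sum.im < 0 := by
  induction M using Multiset.induction with
  | empty => left; rfl
  | cons y M ih =>
    right
    rw [Multiset.map_cons, Multiset.sum_cons, Complex.add_im]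
    have hy := h y (Multiset.mem_cons_self _ _)
    have y0 : y ≠ 0 := by rintro rfl; simp at hy
    have h1 : (1 / ((0:ℂ) - y)).im < 0 := by
      rw [zero_sub, one_div, Complex.inv_im]
      apply div_neg_of_neg_of_pos
      · simpa using hy
      · rw [Complex.normSq_neg]; exact Complex.normSq_pos.2 y0
    rcases ih (fun z hz => h z (Multiset.mem_cons_of_mem hz)) with h2 | h2
    · subst h2; simpa using h1
    · linarith

lemma KS_logder {g : MvPolynomial σ ℝ} (hg : KS_Stable g) (u : σ → ℝ) (hu : ∀ i, 0 ≤ u i)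
    (w : σ → ℂ) (hw : ∀ i, 0 < (w i).im) :
    (MvPolynomial.aeval w (KS_D u g) / MvPolynomial.aeval w g).im ≤ 0 ∧
    MvPolynomial.aeval w (KS_D u g) / MvPolynomial.aeval w g ≠ 1 := by
  set a := KS_line g w (fun i => algebraMap ℝ ℂ (u i)) with ha
  have e0 : a.eval 0 = MvPolynomial.aeval w g := by
    rw [ha, KS_line_eval]; simp
  have e1 : a.derivative.eval 0 = MvPolynomial.aeval w (KS_D u g) := by
    rw [ha, KS_line_derivative_eval, KS_line_eval]; simp
  have hne : a.eval 0 ≠ 0 := by rw [e0]; exact hg w hw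
  have hroots : ∀ y ∈ a.roots, y.im < 0 := by
    intro y hy
    by_contra hcon
    push Not at hcon
    have := Polynomial.isRoot_of_mem_roots hy
    rw [Polynomial.IsRoot.def, ha, KS_line_eval] at this
    refine hg _ ?_ this
    intro i
    simp only [Complex.coe_algebraMap, Complex.add_im, Complex.im_ofReal_mul]
    have := hw i
    have := mul_nonneg (hu i) hcon
    linarith
  have hf := (IsAlgClosed.splits a).eval_derivative_div_eval_of_ne_zero hne
  rw [← e0, ← e1, hf]
  rcases KS_multiset_im a.roots hroots with h | h
  · rw [h]; simp
  · refine ⟨h.le, ?_⟩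
    intro h1
    rw [h1] at h
    simp at h

lemma KS_stable_sub {g : MvPolynomial σ ℝ} (hg : KS_Stable g) (u : σ → ℝ) (hu : ∀ i, 0 ≤ u i) :
    KS_Stable (g - KS_D u g) := by
  intro w hw h0
  have h1 := (KS_logder hg u hu w hw).2
  rw [map_sub, sub_eq_zero] at h0
  rw [← h0, div_self (hg w hw)] at h1
  exact h1 rfl

lemma KS_line_splits {g : MvPolynomial σ ℝ} (hg : KS_Stable g) (z v : σ → ℝ) (hv : ∀ i, 0 < v i) :
    (KS_line g z v).Splits := by
  have hup : ∀ s : ℂ, 0 < s.im → Polynomial.aeval s (KS_line g z v) ≠ 0 := by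
    intro s hs
    rw [KS_line_aeval]
    apply hg
    intro i
    simp only [Complex.add_im, Complex.ofReal_im, Complex.im_ofReal_mul, zero_add]
    exact mul_pos (hv i) hs
  apply Polynomial.Splits.of_splits_map (algebraMap ℝ ℂ) (IsAlgClosed.splits _)
  intro y hy
  have hy := Polynomial.isRoot_of_mem_roots hy
  rw [Polynomial.IsRoot.def, Polynomial.eval_map_algebraMap] at hy
  have h1 : ¬ 0 < y.im := fun h => hup y h hy
  have h2 : ¬ 0 < (starRingEnd ℂ y).im := fun h => hup _ h (by
    rw [KS_aeval_conj, hy, map_zero])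
  rw [Complex.conj_im] at h2
  refine ⟨y.re, ?_⟩
  apply Complex.ext
  · simp
  · simp; linarith

lemma KS_eval_line (g : MvPolynomial σ ℝ) (z v : σ → ℝ) (s : ℝ) :
    (KS_line g z v).eval s = MvPolynomial.eval (fun i => z i + v i * s) g := by
  rw [KS_line_eval, MvPolynomial.aeval_eq_eval]

lemma KS_eval_line_der (g : MvPolynomial σ ℝ) (z v : σ → ℝ) (s : ℝ) :
    (KS_line g z v).derivative.eval s = MvPolynomial.eval (fun i => z i + v i * s) (KS_D v g) := by
  have := KS_line_derivative_eval g z v s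
  simp only [Algebra.algebraMap_self, RingHom.id_apply] at this
  rw [this, KS_eval_line]

/-- Ray version of monotonicity and convexity of the barrier. -/
lemma KS_ray {g : MvPolynomial σ ℝ} (hg : KS_Stable g) (z v u : σ → ℝ) (hv : ∀ i, 0 < v i)
    (hu : ∀ i, 0 ≤ u i) (hpos : ∀ s : ℝ, 0 ≤ s → 0 < MvPolynomial.eval (fun i => z i + v i * s) g)
    (δ : ℝ) (hδ : 0 ≤ δ) (y : σ → ℝ) (hy : y = fun i => z i + v i * δ) :
    KS_Phi u g y ≤ KS_Phi u g z ∧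
    MvPolynomial.eval y (KS_D v (KS_D u g)) * MvPolynomial.eval y g -
      MvPolynomial.eval y (KS_D u g) * MvPolynomial.eval y (KS_D v g) ≤ 0 ∧
    0 ≤ KS_Phi u g z - KS_Phi u g y + δ * ((MvPolynomial.eval y (KS_D v (KS_D u g)) * MvPolynomial.eval y g -
      MvPolynomial.eval y (KS_D u g) * MvPolynomial.eval y (KS_D v g)) / MvPolynomial.eval y g ^ 2) := by
  have := KS_uni (KS_line g z v) (KS_line (KS_D u g) z v) (KS_line_splits hg z v hv) (by
    intro s hs
    rw [KS_line_aeval, KS_line_aeval]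
    apply (KS_logder hg u hu _ _).1
    intro i
    simp only [Complex.add_im, Complex.ofReal_im, Complex.im_ofReal_mul, zero_add]
    exact mul_pos (hv i) hs) (by
    intro s hs
    rw [KS_eval_line]
    exact hpos s hs) δ hδ
  simp only [KS_eval_line, KS_eval_line_der, ← hy, mul_zero, add_zero] at this
  exact this

lemma KS_D_add (u v : σ → ℝ) (p : MvPolynomial σ ℝ) : KS_D (u + v) p = KS_D u p + KS_D v p := by
  simp [KS_D, add_mul, Finset.sum_add_distrib]

lemma KS_D_smul (c : ℝ) (u : σ → ℝ) (p : MvPolynomial σ ℝ) :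
    KS_D (c • u) p = MvPolynomial.C c * KS_D u p := by
  simp [KS_D, Finset.mul_sum, mul_assoc]

/-- Barrier monotonicity and convexity for nonnegative directions. -/
lemma KS_barrier {g : MvPolynomial σ ℝ} (hg : KS_Stable g) (z v u : σ → ℝ) (hv : ∀ i, 0 ≤ v i)
    (hu : ∀ i, 0 ≤ u i) (hz : KS_Ab g z)
    (δ : ℝ) (hδ : 0 ≤ δ) (y : σ → ℝ) (hy : y = fun i => z i + v i * δ) :
    KS_Phi u g y ≤ KS_Phi u g z ∧
    MvPolynomial.eval y (KS_D v (KS_D u g)) * MvPolynomial.eval y g -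
      MvPolynomial.eval y (KS_D u g) * MvPolynomial.eval y (KS_D v g) ≤ 0 ∧
    0 ≤ KS_Phi u g z - KS_Phi u g y + δ * ((MvPolynomial.eval y (KS_D v (KS_D u g)) * MvPolynomial.eval y g -
      MvPolynomial.eval y (KS_D u g) * MvPolynomial.eval y (KS_D v g)) / MvPolynomial.eval y g ^ 2) := by
  subst hy
  -- perturbation
  have key := fun (η : ℝ) (hη : 0 < η) => KS_ray hg z (v + η • (1 : σ → ℝ)) u
    (fun i => by simp; linarith [hv i]) hu (fun s hs => hz _ (fun i => by
      simp only [Pi.add_apply, Pi.smul_apply, Pi.one_apply, smul_eq_mul, mul_one]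
      have := mul_nonneg (add_nonneg (hv i) hη.le) hs
      linarith)) δ hδ _ rfl
  simp only [KS_D_add, KS_D_smul, KS_Phi, map_add, map_mul, MvPolynomial.eval_C, Pi.add_apply, Pi.smul_apply,
    Pi.one_apply, smul_eq_mul, mul_one] at key ⊢
  have hc : ∀ q : MvPolynomial σ ℝ, Continuous (fun η : ℝ => MvPolynomial.eval (fun i => z i + (v i + η) * δ) q) := by
    intro q
    exact q.continuous_eval.comp (by fun_prop)
  have hgy : MvPolynomial.eval (fun i => z i + (v i + 0) * δ) g ≠ 0 := by
    refine (hz _ (fun i => ?_)).ne'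
    have := mul_nonneg (hv i) hδ
    simpa using this
  have hlim : ∀ F : ℝ → ℝ, ContinuousAt F 0 → (∀ η, 0 < η → 0 ≤ F η) → 0 ≤ F 0 := by
    intro F hF h
    have h1 : Filter.Tendsto F (nhdsWithin 0 (Set.Ioi 0)) (nhds (F 0)) := hF.mono_left nhdsWithin_le_nhds
    refine ge_of_tendsto h1 ?_
    filter_upwards [self_mem_nhdsWithin] with η hη using h η hη
  have hcD := fun q => (hc q).continuousAt (x := 0)
  refine ⟨?_, ?_, ?_⟩
  · have := hlim (fun η => MvPolynomial.eval z (KS_D u g) / MvPolynomial.eval z g -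
      MvPolynomial.eval (fun i => z i + (v i + η) * δ) (KS_D u g) / MvPolynomial.eval (fun i => z i + (v i + η) * δ) g)
      (continuousAt_const.sub ((hcD _).div (hcD _) hgy)) (fun η hη => sub_nonneg.2 (key η hη).1)
    simpa using this
  · have := hlim _ (by
      refine ContinuousAt.neg (((((hcD (KS_D v (KS_D u g))).add (continuousAt_id.mul (hcD (KS_D 1 (KS_D u g))))).mul (hcD g)).sub
        ((hcD (KS_D u g)).mul ((hcD (KS_D v g)).add (continuousAt_id.mul (hcD (KS_D 1 g))))))))
      (fun η hη => neg_nonneg.2 (key η hη).2.1)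
    simpa using this
  · have := hlim _ (by
      exact (continuousAt_const.sub ((hcD _).div (hcD _) hgy)).add (continuousAt_const.mul (ContinuousAt.div
       ((((hcD (KS_D v (KS_D u g))).add (continuousAt_id.mul (hcD (KS_D 1 (KS_D u g))))).mul (hcD g)).sub
        ((hcD (KS_D u g)).mul ((hcD (KS_D v g)).add (continuousAt_id.mul (hcD (KS_D 1 g))))))
        ((hcD g).pow 2) (pow_ne_zero 2 hgy))))
      (fun η hη => (key η hη).2.2)
    simpa using this
end
section
set_option linter.unusedSectionVars false
variable {σ : Type} [Fintype σ]

lemma KS_Ab_mono {g : MvPolynomial σ ℝ} {z y : σ → ℝ} (h : KS_Ab g z) (hy : ∀ i, z i ≤ y i) : KS_Ab g y :=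
  fun x hx => h x (fun i => (hy i).trans (hx i))

lemma KS_Ab_pos {g : MvPolynomial σ ℝ} {z : σ → ℝ} (h : KS_Ab g z) : 0 < MvPolynomial.eval z g :=
  h z (fun _ => le_rfl)

lemma KS_D_nonneg {g : MvPolynomial σ ℝ} (hg : KS_Stable g) {z u : σ → ℝ} (hz : KS_Ab g z)
    (hu : ∀ i, 0 ≤ u i) : 0 ≤ MvPolynomial.eval z (KS_D u g) := by
  have hp : ∀ v : σ → ℝ, (∀ i, 0 < v i) → 0 ≤ MvPolynomial.eval z (KS_D v g) := by
    intro v hv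
    have hs := KS_line_splits hg z v hv
    have e0 := KS_eval_line g z v 0
    have e1 := KS_eval_line_der g z v 0
    simp only [mul_zero, add_zero] at e0 e1
    have hne : (KS_line g z v).eval 0 ≠ 0 := by rw [e0]; exact (KS_Ab_pos hz).ne'
    have := hs.eval_derivative_eq_eval_mul_sum hne
    rw [e1, e0] at this
    rw [this]
    apply mul_nonneg (KS_Ab_pos hz).le
    apply Multiset.sum_nonneg
    intro x hx
    obtain ⟨ρ, hρ, rfl⟩ := Multiset.mem_map.1 hx
    have hr := Polynomial.isRoot_of_mem_roots hρ
    rw [Polynomial.IsRoot.def, KS_eval_line] at hr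
    have hneg : ρ < 0 := by
      by_contra hcon
      push Not at hcon
      have := hz (fun i => z i + v i * ρ) (fun i => by
        have := mul_nonneg (hv i).le hcon
        linarith)
      linarith
    rw [zero_sub]
    have : 0 < -ρ := by linarith
    positivity
  have key : ∀ η : ℝ, 0 < η → 0 ≤ MvPolynomial.eval z (KS_D u g) + η * MvPolynomial.eval z (KS_D 1 g) := by
    intro η hη
    have := hp (u + η • (1 : σ → ℝ)) (fun i => by simp; linarith [hu i])
    simpa [KS_D_add, KS_D_smul] using this
  have hc : Filter.Tendsto (fun η : ℝ => MvPolynomial.eval z (KS_D u g) + η * MvPolynomial.eval z (KS_D 1 g))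
      (nhdsWithin 0 (Set.Ioi 0)) (nhds (MvPolynomial.eval z (KS_D u g) + 0 * MvPolynomial.eval z (KS_D 1 g))) := by
    apply Filter.Tendsto.mono_left _ nhdsWithin_le_nhds
    apply Continuous.tendsto (by fun_prop)
  have := ge_of_tendsto hc (by filter_upwards [self_mem_nhdsWithin] with η hη using key η hη)
  simpa using this

lemma KS_Phi_mono {g : MvPolynomial σ ℝ} (hg : KS_Stable g) {z y u : σ → ℝ} (hz : KS_Ab g z)
    (hy : ∀ i, z i ≤ y i) (hu : ∀ i, 0 ≤ u i) : KS_Phi u g y ≤ KS_Phi u g z :=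
  (KS_barrier hg z (y - z) u (fun i => by simpa using hy i) hu hz 1 zero_le_one y (by
    funext i; simp)).1

lemma KS_Ab_sub {g : MvPolynomial σ ℝ} (hg : KS_Stable g) {z u : σ → ℝ} (hz : KS_Ab g z)
    (hu : ∀ i, 0 ≤ u i) (h : KS_Phi u g z < 1) : KS_Ab (g - KS_D u g) z := by
  intro y hy
  have h1 := (KS_Phi_mono hg hz hy hu).trans_lt h
  rw [KS_Phi, div_lt_one (hz y hy)] at h1
  rw [map_sub]; linarith

lemma KS_D_sub (u : σ → ℝ) (p q : MvPolynomial σ ℝ) : KS_D u (p - q) = KS_D u p - KS_D u q := by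
  simp [KS_D, mul_sub, Finset.sum_sub_distrib]

lemma KS_step {g : MvPolynomial σ ℝ} (hg : KS_Stable g) {z u : σ → ℝ} (hz : KS_Ab g z)
    (hu : ∀ i, 0 ≤ u i) (δ : ℝ) (hδ : 0 < δ) (h : KS_Phi u g z ≤ 1 - 1 / δ) :
    KS_Ab (g - KS_D u g) (z + δ • u) ∧
    ∀ w : σ → ℝ, (∀ i, 0 ≤ w i) → KS_Phi w (g - KS_D u g) (z + δ • u) ≤ KS_Phi w g z := by
  have hle : ∀ i, z i ≤ (z + δ • u) i := fun i => by
    have := mul_nonneg hδ.le (hu i)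
    simpa using this
  have hinv : 0 < 1 / δ := by positivity
  refine ⟨KS_Ab_mono (KS_Ab_sub hg hz hu (by linarith)) hle, ?_⟩
  intro w hw
  obtain ⟨-, h2, h3⟩ := KS_barrier hg z u w hu hw hz δ hδ.le (z + δ • u) (by
    funext i; simp [mul_comm])
  have h4 := (KS_Phi_mono hg hz hle hu).trans h
  have hG := hz _ hle
  set y := z + δ • u
  rw [KS_D_comm u w] at h2 h3
  unfold KS_Phi at h3 h4 ⊢
  rw [KS_D_sub, map_sub, map_sub]
  set φ := MvPolynomial.eval z (KS_D w g) / MvPolynomial.eval z g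
  set G := MvPolynomial.eval y g
  set A := MvPolynomial.eval y (KS_D u g)
  set K := MvPolynomial.eval y (KS_D w g)
  set M := MvPolynomial.eval y (KS_D w (KS_D u g))
  have hGA : G ≤ δ * (G - A) := by
    rw [div_le_iff₀ hG] at h4
    have e4 : (1 - 1 / δ) * G = G - G / δ := by ring
    rw [e4] at h4
    have h5 : G / δ ≤ G - A := by linarith
    rw [div_le_iff₀ hδ] at h5
    linarith
  have hGA0 : 0 < G - A := by
    by_contra hcon
    push Not at hcon
    have := mul_nonpos_of_nonneg_of_nonpos hδ.le hcon
    linarith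
  have e : (K - M) / (G - A) = K / G + (-(M * G - K * A)) / (G * (G - A)) := by
    field_simp; ring
  have e2 : (-(M * G - K * A)) / (G * (G - A)) ≤ δ * ((-(M * G - K * A)) / G ^ 2) := by
    rw [← mul_div_assoc, div_le_div_iff₀ (by positivity) (by positivity)]
    have hX : 0 ≤ -(M * G - K * A) := by linarith
    have : G * G ≤ δ * (G - A) * G := by nlinarith
    nlinarith
  have e3 : δ * ((-(M * G - K * A)) / G ^ 2) = - (δ * ((M * G - K * A) / G ^ 2)) := by
    rw [neg_div]; ring
  rw [e]; linarith

lemma KS_Phi_one_tendsto (g : MvPolynomial σ ℝ) (z : σ → ℝ) :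
    Filter.Tendsto (fun s : ℝ => KS_Phi 1 g (fun i => z i + 1 * s)) Filter.atTop (nhds 0) := by
  have e : (fun s : ℝ => KS_Phi 1 g (fun i => z i + 1 * s)) =
      fun s => (KS_line g z 1).derivative.eval s / (KS_line g z 1).eval s := by
    funext s
    rw [KS_eval_line, KS_eval_line_der]; rfl
  rw [e]
  by_cases h : (KS_line g z 1).natDegree = 0
  · rw [Polynomial.eq_C_of_natDegree_eq_zero h]; simp
  · exact Polynomial.div_tendsto_atTop_zero_of_degree_lt _ _ (Polynomial.degree_derivative_lt (by
      rintro h0; rw [h0] at h; simp at h))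

lemma KS_Ab_nonempty {g : MvPolynomial σ ℝ} (hg : KS_Stable g) (u : σ → ℝ) (hu : ∀ i, 0 ≤ u i)
    (h : ∃ z, KS_Ab g z) : ∃ z, KS_Ab (g - KS_D u g) z := by
  obtain ⟨z, hz⟩ := h
  set c := ∑ i, u i with hc
  have hc0 : 0 ≤ c := Finset.sum_nonneg fun i _ => hu i
  have hcu : ∀ i, u i ≤ c := fun i => Finset.single_le_sum (fun i _ => hu i) (Finset.mem_univ i)
  have ht := (KS_Phi_one_tendsto g z).const_mul c
  rw [mul_zero] at ht
  obtain ⟨s, hs1, hs0⟩ := ((ht.eventually (gt_mem_nhds zero_lt_one)).and (Filter.eventually_ge_atTop 0)).exists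
  set y := fun i => z i + 1 * s with hy
  have hyz : ∀ i, z i ≤ y i := fun i => by simp [hy, hs0]
  have hyA := KS_Ab_mono hz hyz
  refine ⟨y, KS_Ab_sub hg hyA hu (lt_of_le_of_lt ?_ hs1)⟩
  have hd := KS_D_nonneg hg hyA (u := c • (1 : σ → ℝ) + (-1 : ℝ) • u) (fun i => by simpa using hcu i)
  rw [KS_D_add, KS_D_smul, KS_D_smul] at hd
  simp only [map_add, map_mul, MvPolynomial.eval_C] at hd
  rw [KS_Phi, KS_Phi, ← mul_div_assoc]
  apply div_le_div_of_nonneg_right _ (KS_Ab_pos hyA).le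
  linarith

lemma KS_Ab_of_sub {g : MvPolynomial σ ℝ} (hg : KS_Stable g) (u : σ → ℝ) (hu : ∀ i, 0 ≤ u i)
    (h : ∃ z, KS_Ab g z) {z : σ → ℝ} (hz : KS_Ab (g - KS_D u g) z) : KS_Ab g z := by
  intro y hy
  by_contra hcon
  push Not at hcon
  obtain ⟨z0, hz0⟩ := h
  set L : ℝ → (σ → ℝ) := fun s i => y i + 1 * s with hL
  have hcont : ∀ q : MvPolynomial σ ℝ, Continuous fun s => MvPolynomial.eval (L s) q := fun q =>
    q.continuous_eval.comp (by rw [hL]; fun_prop)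
  -- a large parameter
  obtain ⟨s0, hs0, hs0p⟩ : ∃ s0, KS_Ab g (L s0) ∧ 0 ≤ s0 := by
    refine ⟨∑ i, |z0 i - y i|, KS_Ab_mono hz0 (fun i => ?_), Finset.sum_nonneg fun i _ => abs_nonneg _⟩
    have h1 : |z0 i - y i| ≤ ∑ i, |z0 i - y i| :=
      Finset.single_le_sum (f := fun i => |z0 i - y i|) (fun i _ => abs_nonneg _) (Finset.mem_univ i)
    have := le_abs_self (z0 i - y i)
    simp only [hL]; linarith
  -- last nonpositive parameter
  set T : Set ℝ := {s | 0 ≤ s ∧ s ≤ s0 ∧ MvPolynomial.eval (L s) g ≤ 0} with hT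
  have hTc : IsCompact T := by
    have : T = Set.Icc 0 s0 ∩ {s | MvPolynomial.eval (L s) g ≤ 0} := by
      ext s; simp [hT, and_assoc]
    rw [this]
    exact isCompact_Icc.inter_right (isClosed_le (hcont g) continuous_const)
  have hTn : T.Nonempty := ⟨0, le_rfl, hs0p, by simpa [hL] using hcon⟩
  obtain ⟨ρ, ⟨hρ0, hρs, hρg⟩, hmax⟩ := hTc.exists_isGreatest hTn
  have hafter : ∀ s, ρ < s → 0 < MvPolynomial.eval (L s) g := by
    intro s hs
    rcases le_total s s0 with h1 | h1
    · by_contra h2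
      push Not at h2
      have := hmax ⟨hρ0.trans hs.le, h1, h2⟩
      linarith
    · exact hs0 _ (fun i => by simp [hL, h1])
  have hDnn : ∀ s, ρ < s → 0 ≤ MvPolynomial.eval (L s) (KS_D u g) := by
    intro s hs
    rcases le_total s s0 with h1 | h1
    · have := (KS_ray hg (L s) 1 u (fun _ => by simp) hu (fun s' hs' => by
        have := hafter (s + s') (by linarith)
        have e : (fun i => L s i + (1 : σ → ℝ) i * s') = L (s + s') := by funext i; simp [hL]; ring
        rw [e]; exact this) (s0 - s) (by linarith) (L s0) (by
          funext i; simp [hL])).1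
      have h2 : 0 ≤ KS_Phi u g (L s0) := div_nonneg (KS_D_nonneg hg hs0 hu) (KS_Ab_pos hs0).le
      have h3 := h2.trans this
      rw [KS_Phi] at h3
      by_contra h4
      push Not at h4
      have := div_neg_of_neg_of_pos h4 (hafter s hs)
      linarith
    · exact KS_D_nonneg hg (KS_Ab_mono hs0 (fun i => by simp [hL, h1])) hu
  have hρD : 0 ≤ MvPolynomial.eval (L ρ) (KS_D u g) := by
    have h1 : Filter.Tendsto (fun s => MvPolynomial.eval (L s) (KS_D u g)) (nhdsWithin ρ (Set.Ioi ρ))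
      (nhds (MvPolynomial.eval (L ρ) (KS_D u g))) := (hcont _).continuousAt.mono_left nhdsWithin_le_nhds
    refine ge_of_tendsto h1 ?_
    filter_upwards [self_mem_nhdsWithin] with s hs using hDnn s hs
  have := hz (L ρ) (fun i => by simp [hL]; linarith [hy i])
  rw [map_sub] at this
  linarith

lemma KS_D_sum {ι : Type} (s : Finset ι) (t : ι → ℝ) (U : ι → σ → ℝ) (p : MvPolynomial σ ℝ) :
    KS_D (∑ j ∈ s, t j • U j) p = ∑ j ∈ s, MvPolynomial.C (t j) * KS_D (U j) p := by
  classical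
  induction s using Finset.induction_on with
  | empty => simp [KS_D]
  | insert j s hj ih => rw [Finset.sum_insert hj, Finset.sum_insert hj, KS_D_add, KS_D_smul, ih]

lemma KS_select {g : MvPolynomial σ ℝ} (hg : KS_Stable g) (h : ∃ z, KS_Ab g z) {ι : Type} [Fintype ι]
    (t : ι → ℝ) (ht : ∀ j, 0 < t j) (hsum : ∑ j, t j = 1) (U : ι → σ → ℝ) (hU : ∀ j i, 0 ≤ U j i)
    {z : σ → ℝ} (hz : KS_Ab (g - KS_D (∑ j, t j • U j) g) z) :
    ∃ j, KS_Ab (g - KS_D (U j) g) z := by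
  have hA := KS_Ab_of_sub hg _ (fun i => by
    rw [Finset.sum_apply]
    exact Finset.sum_nonneg fun j _ => mul_nonneg (ht j).le (hU j i)) h hz
  have hG := KS_Ab_pos hA
  by_contra hcon
  push Not at hcon
  have h1 : ∀ j, MvPolynomial.eval z g ≤ MvPolynomial.eval z (KS_D (U j) g) := by
    intro j
    by_contra h2
    push Not at h2
    apply hcon j
    apply KS_Ab_sub hg hA (hU j)
    rw [KS_Phi, div_lt_one hG]; exact h2
  have h3 := KS_Ab_pos hz
  rw [map_sub, KS_D_sum, map_sum] at h3
  have h4 : ∑ j, t j * MvPolynomial.eval z g ≤ ∑ j, MvPolynomial.eval z (MvPolynomial.C (t j) * KS_D (U j) g) := by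
    apply Finset.sum_le_sum
    intro j _
    rw [map_mul, MvPolynomial.eval_C]
    exact mul_le_mul_of_nonneg_left (h1 j) (ht j).le
  rw [← Finset.sum_mul, hsum, one_mul] at h4
  linarith
end
/-- Successive application of the operators `1 - D_u`. -/
noncomputable def KS_OP {σ : Type} [Fintype σ] : List (σ → ℝ) → MvPolynomial σ ℝ → MvPolynomial σ ℝ
  | [], g => g
  | u :: us, g => KS_OP us (g - KS_D u g)

section
set_option linter.unusedSectionVars false
variable {σ : Type} [Fintype σ]

lemma KS_OP_nil (g : MvPolynomial σ ℝ) : KS_OP [] g = g := by simp only [KS_OP]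
lemma KS_OP_cons (us : List (σ → ℝ)) (u : σ → ℝ) (g : MvPolynomial σ ℝ) :
  KS_OP (u :: us) g = KS_OP us (g - KS_D u g) := by simp only [KS_OP]
lemma KS_eaux (u v : σ → ℝ) (g : MvPolynomial σ ℝ) :
  g - KS_D u g - KS_D v (g - KS_D u g) = g - KS_D v g - KS_D u (g - KS_D v g) := by
      rw [KS_D_sub, KS_D_sub, KS_D_comm v u]
      exact sub_sub_sub_comm _ _ _ _
lemma KS_OP_comm (us : List (σ → ℝ)) (u : σ → ℝ) (g : MvPolynomial σ ℝ) :
    KS_OP us (g - KS_D u g) = KS_OP us g - KS_D u (KS_OP us g) := by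
  induction us generalizing g with
  | nil => rw [KS_OP_nil, KS_OP_nil]
  | cons v us ih =>
    rw [KS_OP_cons, KS_OP_cons, KS_eaux, ih]

lemma KS_OP_stable (us : List (σ → ℝ)) (hus : ∀ u ∈ us, ∀ i, 0 ≤ u i) {g : MvPolynomial σ ℝ}
    (hg : KS_Stable g) (h : ∃ z, KS_Ab g z) : KS_Stable (KS_OP us g) ∧ ∃ z, KS_Ab (KS_OP us g) z := by
  induction us generalizing g with
  | nil => exact ⟨hg, h⟩
  | cons v us ih =>
    have hv := hus v (by simp)
    exact ih (fun u hu => hus u (by simp [hu])) (KS_stable_sub hg v hv) (KS_Ab_nonempty hg v hv h)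

lemma KS_OP_barrier (us : List (σ → ℝ)) (hus : ∀ u ∈ us, ∀ i, 0 ≤ u i) {g : MvPolynomial σ ℝ}
    (hg : KS_Stable g) {z : σ → ℝ} (hz : KS_Ab g z) (δ : ℝ) (hδ : 0 < δ)
    (h : ∀ u ∈ us, KS_Phi u g z ≤ 1 - 1 / δ) : KS_Ab (KS_OP us g) (z + δ • us.sum) := by
  induction us generalizing g z with
  | nil => simpa [KS_OP] using hz
  | cons v us ih =>
    have hv := hus v (by simp)
    obtain ⟨h1, h2⟩ := KS_step hg hz hv δ hδ (h v (by simp))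
    have := ih (fun u hu => hus u (by simp [hu])) (KS_stable_sub hg v hv) h1 (fun u hu =>
      (h2 u (hus u (by simp [hu]))).trans (h u (by simp [hu])))
    rw [List.sum_cons, smul_add, ← add_assoc]
    exact this

lemma KS_OP_select {κ ι : Type} [Fintype ι] [DecidableEq κ] (is : List κ) (hnd : is.Nodup) (t : ι → ℝ)
    (ht : ∀ j, 0 < t j) (hsum : ∑ j, t j = 1) (U : κ → ι → σ → ℝ) (hU : ∀ i j k, 0 ≤ U i j k)
    {g : MvPolynomial σ ℝ} (hg : KS_Stable g) (h : ∃ z, KS_Ab g z) {z : σ → ℝ}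
    (hz : KS_Ab (KS_OP (is.map fun i => ∑ j, t j • U i j) g) z) :
    ∃ f : κ → ι, KS_Ab (KS_OP (is.map fun i => U i (f i)) g) z := by
  have hne : Nonempty ι := by
    by_contra hc
    rw [not_nonempty_iff] at hc
    simp at hsum
  induction is generalizing g with
  | nil => exact ⟨fun _ => hne.some, hz⟩
  | cons i is ih =>
    rw [List.nodup_cons] at hnd
    have hpos : ∀ i k, 0 ≤ (∑ j, t j • U i j) k := by
      intro i k
      rw [Finset.sum_apply]
      exact Finset.sum_nonneg fun j _ => mul_nonneg (ht j).le (hU i j k)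
    have hz' : KS_Ab (KS_OP (is.map fun i => ∑ j, t j • U i j) (g - KS_D (∑ j, t j • U i j) g)) z := hz
    rw [KS_OP_comm] at hz'
    obtain ⟨hs, hn⟩ := KS_OP_stable (is.map fun i => ∑ j, t j • U i j) (by
      intro u hu
      obtain ⟨i, _, rfl⟩ := List.mem_map.1 hu
      exact hpos i) hg h
    obtain ⟨j, hj⟩ := KS_select hs hn t ht hsum (U i) (hU i) hz'
    rw [← KS_OP_comm] at hj
    obtain ⟨f, hf⟩ := ih hnd.2 (KS_stable_sub hg (U i j) (hU i j)) (KS_Ab_nonempty hg (U i j) (hU i j) h) hj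
    refine ⟨Function.update f i j, ?_⟩
    have e : (is.map fun i' => U i' (Function.update f i j i')) = is.map fun i' => U i' (f i') := by
      apply List.map_congr_left
      intro a ha
      have : a ≠ i := by rintro rfl; exact hnd.1 ha
      simp [Function.update_of_ne this]
    rw [List.map_cons, e]
    simpa [KS_OP] using hf

/-- Affine in every variable. -/
def KS_Aff [DecidableEq σ] (p : MvPolynomial σ ℝ) : Prop :=
  ∀ k, KS_D (Pi.single k 1) (KS_D (Pi.single k 1) p) = 0

lemma KS_single [DecidableEq σ] (k : σ) (c : ℝ) : (Pi.single k c : σ → ℝ) = c • Pi.single k 1 := by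
  rw [← Pi.single_smul]; simp

lemma KS_Aff_eval [DecidableEq σ] {p : MvPolynomial σ ℝ} (hp : KS_Aff p) (k : σ) (c : ℝ) (z : σ → ℝ) :
    MvPolynomial.eval z (p - KS_D (Pi.single k c) p) = MvPolynomial.eval (z - Pi.single k c) p := by
  set v : σ → ℝ := Pi.single k c with hv
  have h2 : KS_D v (KS_D v p) = 0 := by
    have hz : ∀ w : σ → ℝ, ∀ a : ℝ, KS_D w (MvPolynomial.C a * KS_D w p) = MvPolynomial.C a * KS_D w (KS_D w p) := by
      intro w a
      rw [← KS_D_smul, KS_D_comm, KS_D_smul]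
    rw [hv, KS_single, KS_D_smul, KS_D_smul, hz, hp k]
    simp
  have hdd : (KS_line p z v).derivative.derivative = 0 := by
    have : (KS_line p z v).derivative = KS_line (KS_D v p) z v := by
      apply Polynomial.funext
      intro s
      rw [KS_eval_line_der, KS_eval_line]
    rw [this]
    apply Polynomial.funext
    intro s
    rw [KS_eval_line_der, h2]; simp
  have h1 := Polynomial.eq_C_of_natDegree_eq_zero (Polynomial.derivative_eq_zero.1 hdd)
  set b := (KS_line p z v).derivative.coeff 0
  have h3 : (KS_line p z v - Polynomial.C b * Polynomial.X).derivative = 0 := by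
    rw [Polynomial.derivative_sub, h1]; simp
  have h4 := Polynomial.eq_C_of_natDegree_eq_zero (Polynomial.derivative_eq_zero.1 h3)
  set a := (KS_line p z v - Polynomial.C b * Polynomial.X).coeff 0
  have h5 : KS_line p z v = Polynomial.C a + Polynomial.C b * Polynomial.X := by
    rw [← h4]; ring
  have e0 := KS_eval_line p z v 0
  have e1 := KS_eval_line p z v (-1)
  have e2 := KS_eval_line_der p z v 0
  rw [h1] at e2
  rw [h5] at e0 e1
  simp only [mul_zero, add_zero, Polynomial.eval_C, Polynomial.eval_add, Polynomial.eval_mul, Polynomial.eval_X,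
    mul_neg, mul_one] at e0 e1 e2
  have e3 : z - v = fun i => z i + - v i := by funext i; simp [sub_eq_add_neg]
  rw [map_sub, ← e0, ← e2, e3, ← e1]
  ring

lemma KS_D_zero (u : σ → ℝ) : KS_D u 0 = 0 := by simp [KS_D]

lemma KS_Aff_OP [DecidableEq σ] (l : List (σ × ℝ)) {p : MvPolynomial σ ℝ} (hp : KS_Aff p) (z : σ → ℝ) :
    MvPolynomial.eval z (KS_OP (l.map fun a => Pi.single a.1 a.2) p) =
      MvPolynomial.eval (z - (l.map fun a => (Pi.single a.1 a.2 : σ → ℝ)).sum) p := by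
  induction l generalizing p with
  | nil => simp [KS_OP]
  | cons a l ih =>
    simp only [List.map_cons, KS_OP, List.sum_cons]
    rw [ih, KS_Aff_eval hp]
    · congr 2; abel
    · intro k
      rw [KS_D_sub, KS_D_sub, hp k, KS_D_comm _ (Pi.single a.1 a.2), KS_D_comm _ (Pi.single a.1 a.2), hp k, KS_D_zero]
      simp
end
/-- The matrix `1 - P + W P`. -/
def KS_M {m : ℕ} (P : Matrix (Fin m) (Fin m) ℂ) (w : Fin m → ℂ) : Matrix (Fin m) (Fin m) ℂ :=
  1 - P + Matrix.diagonal w * P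

section
variable {m : ℕ} {P : Matrix (Fin m) (Fin m) ℂ}

lemma KS_M_conj (hP1 : Pᴴ = P) (w : Fin m → ℂ) :
    (KS_M P fun i => star (w i)).det = star (KS_M P w).det := by
  have e : ∀ w, KS_M P w = 1 + (Matrix.diagonal w - 1) * P := by
    intro w; rw [KS_M, sub_mul, one_mul]; abel
  rw [← Matrix.det_conjTranspose, e, e, Matrix.conjTranspose_add, Matrix.conjTranspose_mul, Matrix.conjTranspose_one,
    Matrix.conjTranspose_sub, Matrix.diagonal_conjTranspose, Matrix.conjTranspose_one, hP1,
    Matrix.det_one_add_mul_comm]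
  rfl

lemma KS_poly (hP1 : Pᴴ = P) (r : ℕ) : ∃ p : MvPolynomial (Fin m × Fin r) ℝ,
    ∀ w : Fin m × Fin r → ℂ, MvPolynomial.aeval w p = ∏ j, (KS_M P fun i => w (i, j)).det := by
  set p0 : MvPolynomial (Fin m × Fin r) ℂ := ∏ j : Fin r,
    Matrix.det (1 - P.map MvPolynomial.C + Matrix.diagonal (fun i => MvPolynomial.X (i, j)) * P.map MvPolynomial.C)
    with hp0
  have hev : ∀ w, MvPolynomial.eval w p0 = ∏ j, (KS_M P fun i => w (i, j)).det := by
    intro w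
    rw [hp0, map_prod]
    refine Finset.prod_congr rfl fun j _ => ?_
    rw [RingHom.map_det]
    congr 1
    ext a b
    simp [KS_M, Matrix.one_apply, Matrix.diagonal_mul]
  have hconj : MvPolynomial.map (starRingEnd ℂ) p0 = p0 := by
    apply MvPolynomial.funext
    intro w
    have h1 : MvPolynomial.eval w (MvPolynomial.map (starRingEnd ℂ) p0) =
        starRingEnd ℂ (MvPolynomial.eval (fun k => star (w k)) p0) := by
      rw [MvPolynomial.eval_map, MvPolynomial.eval, MvPolynomial.coe_eval₂Hom, MvPolynomial.eval₂_comp_left]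
      simp only [RingHom.comp_id]
      congr 1
      funext k
      simp
    rw [h1, hev, hev, map_prod]
    refine Finset.prod_congr rfl fun j _ => ?_
    rw [KS_M_conj hP1]
    simp
  have hr : p0 ∈ Set.range (MvPolynomial.map (σ := Fin m × Fin r) (algebraMap ℝ ℂ)) := by
    rw [MvPolynomial.mem_range_map_iff_coeffs_subset]
    intro c hc
    obtain ⟨d, _, rfl⟩ := MvPolynomial.mem_coeffs_iff.1 hc
    have := congrArg (MvPolynomial.coeff d) hconj
    rw [MvPolynomial.coeff_map] at this
    exact ⟨_, Complex.conj_eq_iff_re.1 this⟩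
  obtain ⟨p, hp⟩ := hr
  refine ⟨p, fun w => ?_⟩
  rw [← hev, ← hp]
  simp [MvPolynomial.eval_map, MvPolynomial.aeval_def]

lemma KS_M_ne (hP1 : Pᴴ = P) (hP2 : P * P = P) (w : Fin m → ℂ) (c : ℂ) (hc : ∀ i, 0 < (c * w i).im) :
    (KS_M P w).det ≠ 0 := by
  intro h0
  obtain ⟨v, hv, hMv⟩ := Matrix.exists_mulVec_eq_zero_iff.2 h0
  set y := P *ᵥ v with hy
  have hPy : P *ᵥ y = y := by rw [hy, Matrix.mulVec_mulVec, hP2]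
  have h1 : v - y + Matrix.diagonal w *ᵥ y = 0 := by
    rw [← hMv, KS_M, Matrix.add_mulVec, Matrix.sub_mulVec, Matrix.one_mulVec, ← Matrix.mulVec_mulVec]
  have h2 : P *ᵥ (Matrix.diagonal w *ᵥ y) = 0 := by
    have := congrArg (P *ᵥ ·) h1
    simp only [Matrix.mulVec_add, Matrix.mulVec_sub, Matrix.mulVec_zero] at this
    rw [hPy, ← hy, sub_self, zero_add] at this
    exact this
  have h3 : star y ⬝ᵥ (Matrix.diagonal w *ᵥ y) = 0 := by
    have : star y = star y ᵥ* P := by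
      conv_lhs => rw [← hPy]
      rw [Matrix.star_mulVec, hP1]
    rw [this, ← Matrix.dotProduct_mulVec, h2, dotProduct_zero]
  have h4 : ∑ i, Complex.normSq (y i) * (c * w i).im = 0 := by
    have := congrArg (fun x => (c * x).im) h3
    simp only [dotProduct, Matrix.mulVec_diagonal, Finset.mul_sum, Complex.im_sum, mul_zero, Complex.zero_im] at this
    rw [← this]
    refine Finset.sum_congr rfl fun i _ => ?_
    have : c * (star y i * (w i * y i)) = ((Complex.normSq (y i) : ℝ) : ℂ) * (c * w i) := by
      rw [← Complex.mul_conj]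
      simp only [Pi.star_apply, RCLike.star_def]; ring
    rw [this, Complex.im_ofReal_mul]
  have h5 := (Finset.sum_eq_zero_iff_of_nonneg (fun i _ => mul_nonneg (Complex.normSq_nonneg (y i)) (hc i).le)).1 h4
  have hy0 : y = 0 := by
    funext i
    have := h5 i (Finset.mem_univ i)
    rcases mul_eq_zero.1 this with h | h
    · simpa using h
    · exact absurd h (hc i).ne'
  rw [hy0] at h1
  apply hv
  simpa using h1

lemma KS_M_row (w : Fin m → ℂ) (i : Fin m) (s : ℂ) :
    (KS_M P (w + Pi.single i s)).det = (KS_M P w).det + s * ((KS_M P w).updateRow i (P i)).det := by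
  have e : KS_M P (w + Pi.single i s) = (KS_M P w).updateRow i (KS_M P w i + s • P i) := by
    ext a b
    by_cases h : a = i
    · subst h
      simp [KS_M, Matrix.diagonal_mul]; ring
    · simp [KS_M, Matrix.diagonal_mul, h]
  rw [e, Matrix.det_updateRow_add, Matrix.det_updateRow_smul, Matrix.updateRow_eq_self]

lemma KS_M_row_const (hP2 : P * P = P) (τ : ℂ) (hτ : τ ≠ 0) (i : Fin m) :
    ((KS_M P fun _ => τ).updateRow i (P i)).det = P i i / τ * (KS_M P fun _ => τ).det := by
  have e : P i = ∑ k, (P i k / τ) • (KS_M P fun _ => τ) k := by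
    have h : τ • P = P * (KS_M P fun _ => τ) := by
      have hd : (Matrix.diagonal fun _ : Fin m => τ) = τ • 1 := by
        rw [← Matrix.diagonal_one, ← Matrix.diagonal_smul]; congr 1; funext; simp
      rw [KS_M, hd, Matrix.mul_add, Matrix.mul_sub, mul_one, hP2, sub_self, zero_add, smul_mul_assoc, one_mul,
        mul_smul_comm, hP2]
    funext b
    have := congrFun (congrFun h i) b
    rw [Matrix.smul_apply, Matrix.mul_apply, smul_eq_mul] at this
    rw [Finset.sum_apply]
    simp only [Pi.smul_apply, smul_eq_mul, div_mul_eq_mul_div]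
    rw [← Finset.sum_div, ← this]
    field_simp
  conv_lhs => rw [e]
  rw [Matrix.det_updateRow_sum, smul_eq_mul]
end
lemma KS_line_affine {σ : Type} [Fintype σ] (p : MvPolynomial σ ℝ) (z v : σ → ℝ) (a b : ℝ)
    (h : ∀ s : ℝ, MvPolynomial.eval (fun i => z i + v i * s) p = a + b * s) :
    MvPolynomial.eval z (KS_D v p) = b ∧ MvPolynomial.eval z (KS_D v (KS_D v p)) = 0 := by
  have h1 : KS_line p z v = Polynomial.C a + Polynomial.C b * Polynomial.X := by
    apply Polynomial.funext
    intro s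
    rw [KS_eval_line, h]; simp
  have h2 : KS_line (KS_D v p) z v = Polynomial.C b := by
    apply Polynomial.funext
    intro s
    rw [KS_eval_line, ← KS_eval_line_der, h1]; simp
  have e1 := KS_eval_line_der p z v 0
  have e2 := KS_eval_line_der (KS_D v p) z v 0
  rw [h1] at e1
  rw [h2] at e2
  simp only [mul_zero, add_zero] at e1 e2
  constructor
  · rw [← e1]; simp
  · rw [← e2]; simp

section
variable {m r : ℕ} {P : Matrix (Fin m) (Fin m) ℂ} {p : MvPolynomial (Fin m × Fin r) ℝ}

lemma KS_p_real (hp : ∀ w : Fin m × Fin r → ℂ, MvPolynomial.aeval w p = ∏ j, (KS_M P fun i => w (i, j)).det)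
    (z : Fin m × Fin r → ℝ) :
    ((MvPolynomial.eval z p : ℝ) : ℂ) = ∏ j, (KS_M P fun i => (z (i, j) : ℂ)).det := by
  rw [← hp (fun k => (z k : ℂ)), ← MvPolynomial.aeval_eq_eval]
  exact (MvPolynomial.aeval_algebraMap_apply ℂ z p).symm

lemma KS_p_stable (hP1 : Pᴴ = P) (hP2 : P * P = P)
    (hp : ∀ w : Fin m × Fin r → ℂ, MvPolynomial.aeval w p = ∏ j, (KS_M P fun i => w (i, j)).det) :
    KS_Stable p := by
  intro w hw
  rw [hp, Finset.prod_ne_zero_iff]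
  intro j _
  exact KS_M_ne hP1 hP2 _ 1 (fun i => by simpa using hw (i, j))

lemma KS_p_pos (hP1 : Pᴴ = P) (hP2 : P * P = P)
    (hp : ∀ w : Fin m × Fin r → ℂ, MvPolynomial.aeval w p = ∏ j, (KS_M P fun i => w (i, j)).det)
    (z : Fin m × Fin r → ℝ) (hz : ∀ k, 0 < z k) : 0 < MvPolynomial.eval z p := by
  have hne : ∀ z : Fin m × Fin r → ℝ, (∀ k, 0 < z k) → MvPolynomial.eval z p ≠ 0 := by
    intro z hz h0
    have := KS_p_real hp z
    rw [h0, Complex.ofReal_zero] at this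
    have h2 := this.symm
    rw [Finset.prod_eq_zero_iff] at h2
    obtain ⟨j, _, hj⟩ := h2
    exact KS_M_ne hP1 hP2 _ Complex.I (fun i => by simpa using hz (i, j)) hj
  have h1 : MvPolynomial.eval (fun _ => (1 : ℝ)) p = 1 := by
    have := KS_p_real hp (fun _ => 1)
    have e : (KS_M P fun _ => 1) = 1 := by simp [KS_M]
    simp only [Complex.ofReal_one, e, Matrix.det_one, Finset.prod_const_one] at this
    exact_mod_cast this
  by_contra hcon
  push Not at hcon
  set φ : ℝ → ℝ := fun s => MvPolynomial.eval (fun k => 1 + s * (z k - 1)) p with hφ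
  have hc : Continuous φ := p.continuous_eval.comp (by fun_prop)
  have := intermediate_value_Icc' (zero_le_one (α := ℝ)) hc.continuousOn
  have h0 : (0 : ℝ) ∈ Set.Icc (φ 1) (φ 0) := by
    constructor
    · simpa [hφ] using hcon
    · simp [hφ, h1]
  obtain ⟨s, ⟨hs0, hs1⟩, hs⟩ := this h0
  refine hne _ (fun k => ?_) hs
  have := hz k
  by_cases h : s = 1
  · subst h; linarith
  · have : s < 1 := lt_of_le_of_ne hs1 h
    nlinarith [mul_nonneg hs0 (hz k).le]

lemma KS_p_row (hp : ∀ w : Fin m × Fin r → ℂ, MvPolynomial.aeval w p = ∏ j, (KS_M P fun i => w (i, j)).det)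
    (z : Fin m × Fin r → ℝ) (i : Fin m) (j : Fin r) (s : ℝ) :
    ((MvPolynomial.eval (fun k => z k + (Pi.single (i, j) 1 : Fin m × Fin r → ℝ) k * s) p : ℝ) : ℂ) =
    (KS_M P fun a => (z (a, j) : ℂ)).det * (∏ j' ∈ Finset.univ.erase j, (KS_M P fun a => (z (a, j') : ℂ)).det) +
     s * (((KS_M P fun a => (z (a, j) : ℂ)).updateRow i (P i)).det *
      (∏ j' ∈ Finset.univ.erase j, (KS_M P fun a => (z (a, j') : ℂ)).det)) := by
  rw [KS_p_real hp, ← Finset.mul_prod_erase _ _ (Finset.mem_univ j)]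
  have e1 : (fun a => (((z (a, j) + (Pi.single (i, j) 1 : Fin m × Fin r → ℝ) (a, j) * s : ℝ)) : ℂ)) =
      (fun a => (z (a, j) : ℂ)) + Pi.single i (s : ℂ) := by
    funext a
    by_cases h : a = i
    · subst h; simp
    · simp [h]
  rw [e1, KS_M_row]
  have e2 : ∀ j' ∈ Finset.univ.erase j,
      (KS_M P fun a => (((z (a, j') + (Pi.single (i, j) 1 : Fin m × Fin r → ℝ) (a, j') * s : ℝ)) : ℂ)).det =
      (KS_M P fun a => (z (a, j') : ℂ)).det := by
    intro j' hj'
    have hne : j' ≠ j := Finset.ne_of_mem_erase hj'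
    congr 2
    funext a
    simp [hne]
  rw [Finset.prod_congr rfl e2]
  ring

lemma KS_p_aff (hp : ∀ w : Fin m × Fin r → ℂ, MvPolynomial.aeval w p = ∏ j, (KS_M P fun i => w (i, j)).det) :
    KS_Aff p := by
  rintro ⟨i, j⟩
  apply MvPolynomial.funext
  intro z
  rw [map_zero]
  refine (KS_line_affine p z _ (((KS_M P fun a => (z (a, j) : ℂ)).det *
      (∏ j' ∈ Finset.univ.erase j, (KS_M P fun a => (z (a, j') : ℂ)).det)).re)
    ((((KS_M P fun a => (z (a, j) : ℂ)).updateRow i (P i)).det *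
      (∏ j' ∈ Finset.univ.erase j, (KS_M P fun a => (z (a, j') : ℂ)).det)).re) (fun s => ?_)).2
  have := congrArg Complex.re (KS_p_row hp z i j s)
  rw [Complex.ofReal_re, Complex.add_re, Complex.re_ofReal_mul] at this
  rw [this]; ring

lemma KS_p_phi (hP2 : P * P = P)
    (hp : ∀ w : Fin m × Fin r → ℂ, MvPolynomial.aeval w p = ∏ j, (KS_M P fun i => w (i, j)).det)
    (τ : ℝ) (hτ : 0 < τ) (i : Fin m) (j : Fin r) :
    MvPolynomial.eval (fun _ => τ) (KS_D (Pi.single (i, j) 1) p) = (P i i).re / τ * MvPolynomial.eval (fun _ => τ) p := by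
  refine (KS_line_affine p (fun _ => τ) _ (MvPolynomial.eval (fun _ => τ) p) _ (fun s => ?_)).1
  have h := KS_p_row hp (fun _ => τ) i j s
  rw [KS_M_row_const hP2 (τ : ℂ) (by exact_mod_cast hτ.ne'), mul_assoc] at h
  have h2 := KS_p_real hp (fun _ => τ)
  rw [← Finset.mul_prod_erase _ _ (Finset.mem_univ j)] at h2
  rw [← h2] at h
  have h3 := congrArg Complex.re h
  rw [Complex.ofReal_re, Complex.add_re, Complex.re_ofReal_mul, Complex.re_mul_ofReal, Complex.div_ofReal_re,
    Complex.ofReal_re] at h3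
  rw [h3]; ring

lemma KS_p_Phi_sum (hP1 : Pᴴ = P) (hP2 : P * P = P)
    (hp : ∀ w : Fin m × Fin r → ℂ, MvPolynomial.aeval w p = ∏ j, (KS_M P fun i => w (i, j)).det)
    (τ : ℝ) (hτ : 0 < τ) (i : Fin m) :
    KS_Phi (∑ j : Fin r, Pi.single (i, j) 1) p (fun _ => τ) = r * (P i i).re / τ := by
  have h := KS_D_sum Finset.univ (fun _ : Fin r => (1 : ℝ)) (fun j => (Pi.single (i, j) 1 : Fin m × Fin r → ℝ)) p
  simp only [one_smul, map_one, one_mul] at h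
  have hpos := KS_p_pos hP1 hP2 hp (fun _ => τ) (fun _ => hτ)
  rw [KS_Phi, h, map_sum, Finset.sum_congr rfl fun j _ => KS_p_phi hP2 hp τ hτ i j]
  simp only [Finset.sum_const, Finset.card_univ, Fintype.card_fin, nsmul_eq_mul]
  field_simp
end
section
open scoped Matrix.Norms.L2Operator MatrixOrder ComplexOrder

lemma KS_norm_eig {m : ℕ} (A : Matrix (Fin m) (Fin m) ℂ) (hA : opNorm (Aᴴ * A) ≠ 0) :
    ∃ v : Fin m → ℂ, v ≠ 0 ∧ (Aᴴ * A) *ᵥ v = ((opNorm (Aᴴ * A) : ℝ) : ℂ) • v := by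
  have hn : opNorm (Aᴴ * A) = ‖Aᴴ * A‖ := (Matrix.cstar_norm_def _).symm
  rw [hn] at hA ⊢
  have hA0 : Aᴴ * A ≠ 0 := by
    intro h; rw [h] at hA; simp at hA
  have : Nontrivial (Matrix (Fin m) (Fin m) ℂ) := ⟨⟨_, _, hA0⟩⟩
  have hnn : 0 ≤ Aᴴ * A := star_mul_self_nonneg A
  have h1 := CStarAlgebra.norm_mem_spectrum_of_nonneg hnn
  rw [spectrum.mem_iff, Matrix.isUnit_iff_isUnit_det, isUnit_iff_ne_zero, not_not] at h1
  obtain ⟨v, hv, h2⟩ := Matrix.exists_mulVec_eq_zero_iff.2 h1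
  refine ⟨v, hv, ?_⟩
  rw [Matrix.sub_mulVec, sub_eq_zero] at h2
  rw [← h2, Algebra.algebraMap_eq_smul_one, Matrix.smul_mulVec, Matrix.one_mulVec]
  funext i
  simp
end

lemma KS_norm_le {m : ℕ} {P : Matrix (Fin m) (Fin m) ℂ} (hP1 : Pᴴ = P) (hP2 : P * P = P) (S : Finset (Fin m))
    (t B : ℝ) (ht : 0 < t) (hB : 0 ≤ B)
    (h : ∀ x : ℝ, B ≤ x → (KS_M P fun i => ((x - if i ∈ S then t⁻¹ else 0 : ℝ) : ℂ)).det ≠ 0) :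
    opNorm (P * diagProj S * P) ≤ t * B := by
  by_contra hcon
  push Not at hcon
  have hQ : diagProj S * diagProj S = diagProj S := by
    rw [diagProj, Matrix.diagonal_mul_diagonal]
    congr 1; funext i; split_ifs <;> simp
  have hQ1 : (diagProj S)ᴴ = diagProj S := by
    rw [diagProj, Matrix.diagonal_conjTranspose]
    congr 1; funext i; simp only [Pi.star_apply]; split_ifs <;> simp
  have e : P * diagProj S * P = (diagProj S * P)ᴴ * (diagProj S * P) := by
    rw [Matrix.conjTranspose_mul, hP1, hQ1, ← mul_assoc, mul_assoc P (diagProj S) (diagProj S), hQ]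
  have hpos : 0 < opNorm (P * diagProj S * P) := lt_of_le_of_lt (by positivity) hcon
  obtain ⟨v, hv, hev⟩ := KS_norm_eig (diagProj S * P) (by rw [← e]; exact hpos.ne')
  rw [← e] at hev
  set l := opNorm (P * diagProj S * P) with hl
  have hl0 : (l : ℂ) ≠ 0 := by exact_mod_cast hpos.ne'
  have hPv : P *ᵥ v = v := by
    have h1 : (l : ℂ) • (P *ᵥ v) = (l : ℂ) • v := by
      rw [← Matrix.mulVec_smul, ← hev, Matrix.mulVec_mulVec, ← mul_assoc, ← mul_assoc, hP2]
    exact smul_right_injective _ hl0 h1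
  have hx : B ≤ l / t := by rw [le_div_iff₀ ht]; linarith
  apply h (l / t) hx
  set w : Fin m → ℂ := fun i => ((l / t - if i ∈ S then t⁻¹ else 0 : ℝ) : ℂ) with hw
  have hd : Matrix.diagonal w = ((l / t : ℝ) : ℂ) • 1 - ((t⁻¹ : ℝ) : ℂ) • diagProj S := by
    ext a b
    by_cases hab : a = b
    · subst hab
      simp only [hw, diagProj]
      by_cases haS : a ∈ S <;> simp [haS]
    · simp [hab, diagProj]
  have e2 : KS_M P w = 1 + (Matrix.diagonal w - 1) * P * P := by
    rw [KS_M, mul_assoc, hP2, sub_mul, one_mul]; abel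
  rw [e2, Matrix.det_one_add_mul_comm, ← Matrix.exists_mulVec_eq_zero_iff]
  refine ⟨v, hv, ?_⟩
  have hPQ : P *ᵥ (diagProj S *ᵥ v) = (l : ℂ) • v := by
    rw [← hev, ← Matrix.mulVec_mulVec, ← Matrix.mulVec_mulVec, hPv]
  rw [Matrix.add_mulVec, Matrix.one_mulVec, ← Matrix.mulVec_mulVec, ← Matrix.mulVec_mulVec, hPv, hd,
    Matrix.sub_mulVec, Matrix.sub_mulVec, Matrix.smul_mulVec, Matrix.smul_mulVec, Matrix.one_mulVec,
    Matrix.mulVec_sub, Matrix.mulVec_sub, Matrix.mulVec_smul, Matrix.mulVec_smul, hPv, hPQ, smul_smul]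
  have : ((l / t : ℝ) : ℂ) = ((t⁻¹ : ℝ) : ℂ) * (l : ℂ) := by push_cast; ring
  rw [this]
  abel

lemma KS_core {m r : ℕ} {P : Matrix (Fin m) (Fin m) ℂ} (hP1 : Pᴴ = P) (hP2 : P * P = P)
    (t : Fin r → ℝ) (ht : ∀ j, 0 < t j) (htsum : ∑ j, t j = 1) (α : ℝ) (hα : 0 < α)
    (hd : ∀ i, r * (P i i).re ≤ α) :
    ∃ f : Fin m → Fin r, ∀ j, opNorm (P * diagProj (Finset.univ.filter fun i => f i = j) * P) ≤
      t j * (1 + Real.sqrt α) ^ 2 := by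
  obtain ⟨p, hp⟩ := KS_poly hP1 r
  have hst := KS_p_stable hP1 hP2 hp
  set s := Real.sqrt α with hs
  have hs0 : 0 < s := Real.sqrt_pos.2 hα
  have hs2 : s ^ 2 = α := Real.sq_sqrt hα.le
  set τ := s + s ^ 2 with hτ
  have hτ0 : 0 < τ := by positivity
  have hAb : KS_Ab p (fun _ => τ) := fun y hy => KS_p_pos hP1 hP2 hp y (fun k => lt_of_lt_of_le hτ0 (hy k))
  set U : Fin m → Fin r → Fin m × Fin r → ℝ := fun i j => Pi.single (i, j) (t j)⁻¹ with hU
  have hUs : ∀ i, ∑ j, t j • U i j = ∑ j, Pi.single (i, j) 1 := by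
    intro i
    refine Finset.sum_congr rfl fun j _ => ?_
    rw [hU]
    simp only
    rw [← Pi.single_smul, smul_eq_mul, mul_inv_cancel₀ (ht j).ne']
  have hU0 : ∀ i j k, 0 ≤ U i j k := by
    intro i j k
    simp only [hU, Pi.single_apply]
    have := (ht j).le
    split_ifs
    · positivity
    · exact le_rfl
  have hav0 : ∀ i k, 0 ≤ (∑ j, t j • U i j) k := by
    intro i k
    rw [Finset.sum_apply]
    exact Finset.sum_nonneg fun j _ => mul_nonneg (ht j).le (hU0 i j k)
  have hbar := KS_OP_barrier ((List.finRange m).map fun i => ∑ j, t j • U i j) (by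
    intro u hu
    obtain ⟨i, _, rfl⟩ := List.mem_map.1 hu
    exact hav0 i) hst hAb (1 + s) (by positivity) (by
    intro u hu
    obtain ⟨i, _, rfl⟩ := List.mem_map.1 hu
    rw [hUs, KS_p_Phi_sum hP1 hP2 hp τ hτ0 i, div_le_iff₀ hτ0]
    have e : (1 - 1 / (1 + s)) * τ = s ^ 2 := by
      rw [hτ]; field_simp; ring
    rw [e, hs2]; exact hd i)
  obtain ⟨f, hf⟩ := KS_OP_select (List.finRange m) (List.nodup_finRange m) t ht htsum U hU0 hst ⟨_, hAb⟩ hbar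
  have hsum1 : ((List.finRange m).map fun i => ∑ j, t j • U i j).sum = 1 := by
    simp only [hUs]
    rw [← Fin.sum_univ_def]
    funext k
    obtain ⟨a, b⟩ := k
    simp only [Finset.sum_apply, Pi.single_apply, Prod.mk.injEq, Pi.one_apply]
    rw [Finset.sum_eq_single a, Finset.sum_eq_single b]
    · simp
    · intro j _ hj; simp [hj.symm]
    · simp
    · intro i _ hi; simp [hi.symm]
    · simp
  rw [hsum1] at hf
  refine ⟨f, fun j => KS_norm_le hP1 hP2 _ (t j) _ (ht j) (by positivity) ?_⟩
  intro x hx h0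
  have h1 := hf (fun _ => x) (fun k => by
    simp only [Pi.add_apply, Pi.smul_apply, Pi.one_apply, smul_eq_mul, mul_one]
    calc τ + (1 + s) = (1 + s) ^ 2 := by rw [hτ]; ring
      _ ≤ x := hx)
  have h2 := KS_Aff_OP ((List.finRange m).map fun i => ((i, f i), (t (f i))⁻¹)) (KS_p_aff hp) (fun _ => x)
  simp only [List.map_map, Function.comp_def] at h2
  have e : (List.map (fun i => U i (f i)) (List.finRange m)) =
    (List.map (fun i => (Pi.single (i, f i) (t (f i))⁻¹ : Fin m × Fin r → ℝ)) (List.finRange m)) := rfl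
  rw [e, h2, ← Fin.sum_univ_def] at h1
  have h3 := KS_p_real hp ((fun _ => x) - ∑ i, (Pi.single (i, f i) (t (f i))⁻¹ : Fin m × Fin r → ℝ))
  have h4 : (∏ j, (KS_M P fun i => ((((fun _ => x) - ∑ i, (Pi.single (i, f i) (t (f i))⁻¹ : Fin m × Fin r → ℝ) :
      Fin m × Fin r → ℝ) (i, j) : ℝ) : ℂ)).det) = 0 := by
    refine Finset.prod_eq_zero (Finset.mem_univ j) ?_
    rw [← h0]
    congr 2
    funext a
    congr 1
    simp only [Pi.sub_apply, Finset.sum_apply, Pi.single_apply, Prod.mk.injEq, Finset.mem_filter, Finset.mem_univ,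
      true_and]
    congr 1
    rw [Finset.sum_eq_single a]
    · by_cases hfa : f a = j
      · simp [hfa]
      · simp [hfa, Ne.symm hfa]
    · intro i _ hi; simp [hi.symm]
    · simp
  rw [h4] at h3
  have : MvPolynomial.eval ((fun _ => x) - ∑ i, (Pi.single (i, f i) (t (f i))⁻¹ : Fin m × Fin r → ℝ)) p = 0 := by
    exact_mod_cast h3
  linarith

theorem stmt9 {m : ℕ} (ε : ℝ) (P : Matrix (Fin m) (Fin m) ℂ)
    (hP1 : Pᴴ = P) (hP2 : P * P = P)
    (hdiag : ∀ i, (P i i).re ≤ ε)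
    (r : ℕ) (t : Fin r → ℝ) (ht : ∀ j, 0 < t j) (htsum : ∑ j, t j = 1) :
    ∃ S : Fin r → Finset (Fin m),
      (∑ j, diagProj (S j) = 1) ∧
      ∀ j, opNorm (P * diagProj (S j) * P) ≤ t j * (1 + Real.sqrt (r * ε)) ^ 2 := by
  suffices hmain : ∃ f : Fin m → Fin r, ∀ j,
      opNorm (P * diagProj (Finset.univ.filter fun i => f i = j) * P) ≤ t j * (1 + Real.sqrt (r * ε)) ^ 2 by
    obtain ⟨f, hf⟩ := hmain
    refine ⟨fun j => Finset.univ.filter fun i => f i = j, ?_, hf⟩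
    ext a b
    rw [Matrix.sum_apply]
    by_cases hab : a = b
    · subst hab
      simp [diagProj]
    · simp [diagProj, hab]
  by_contra hcon
  push Not at hcon
  -- every choice violates the bound for some colour
  choose jj hjj using hcon
  have hcont : Continuous fun a : ℝ => (1 + Real.sqrt a) ^ 2 := by fun_prop
  have hev : ∀ᶠ η in nhdsWithin (0 : ℝ) (Set.Ioi 0), ∀ f : Fin m → Fin r,
      t (jj f) * (1 + Real.sqrt (max (r * ε) 0 + η)) ^ 2 <
        opNorm (P * diagProj (Finset.univ.filter fun i => f i = jj f) * P) := by
    rw [Filter.eventually_all]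
    intro f
    have hc : Continuous fun η : ℝ => t (jj f) * (1 + Real.sqrt (max (r * ε) 0 + η)) ^ 2 := by fun_prop
    have h0 : t (jj f) * (1 + Real.sqrt (max (r * ε) 0 + 0)) ^ 2 <
        opNorm (P * diagProj (Finset.univ.filter fun i => f i = jj f) * P) := by
      have e : Real.sqrt (max (r * ε) 0 + 0) = Real.sqrt (r * ε) := by
        rw [add_zero]
        rcases le_total (r * ε) 0 with h | h
        · rw [max_eq_right h, Real.sqrt_eq_zero_of_nonpos h, Real.sqrt_zero]
        · rw [max_eq_left h]
      rw [e]; exact hjj f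
    exact (hc.continuousAt.eventually (gt_mem_nhds h0)).filter_mono nhdsWithin_le_nhds
  obtain ⟨η, hη, hη0⟩ := (hev.and self_mem_nhdsWithin).exists
  have hη0' : 0 < η := hη0
  obtain ⟨f, hf⟩ := KS_core hP1 hP2 t ht htsum (max (r * ε) 0 + η)
    (by have := le_max_right (r * ε) 0; linarith) (fun i => by
      have h1 := le_max_left (r * ε) 0
      have h2 := mul_le_mul_of_nonneg_left (hdiag i) (Nat.cast_nonneg (α := ℝ) r)
      linarith)
  exact absurd (hf (jj f)) (not_le.2 (hη f))
end

section
/- There is a universal constant C > 0 such that the following holds. Let P ∈ M_m(ℂ) be an m × m complex projection matrix (P = P* = P²), let Q ∈ M_m(ℂ) be a diagonal projection, and let t ∈ [0,1]. Assume that the diagonal entries of Q P Q are each at most ε, i.e., ⟨P e_i, e_i⟩ ≤ ε for each standard basis vector e_i with Q e_i = e_i. Then there is a diagonal projection Q' ≤ Q (i.e., Q' Q = Q') such that ‖P Q' P − t P Q P‖ ≤ C ε^{1/4}. -/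
open Matrix
noncomputable section WeaverKS

namespace WKS

variable {κ : Type} [DecidableEq κ]

/-- Discrete partial derivative; for functions affine in each variable it is the derivative. -/
def pd {R : Type} [CommRing R] (k : κ) : Module.End R ((κ → R) → R) where
  toFun Q z := Q (Function.update z k 1) - Q (Function.update z k 0)
  map_add' Q Q' := by funext z; simp; ring
  map_smul' c Q := by funext z; simp; ring

theorem pd_apply {R : Type} [CommRing R] (k : κ) (Q : (κ → R) → R) (z : κ → R) :
    pd k Q z = Q (Function.update z k 1) - Q (Function.update z k 0) := rfl

theorem pd_comm {R : Type} [CommRing R] (k l : κ) : Commute (pd (R := R) k) (pd l) := by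
  by_cases h : k = l
  · subst h; rfl
  · refine LinearMap.ext fun Q => funext fun z => ?_
    simp only [Module.End.mul_apply, pd_apply]
    rw [Function.update_comm h, Function.update_comm h, Function.update_comm h,
      Function.update_comm h]
    ring

/-- Multi-affine functions. -/
def Aff {R : Type} [CommRing R] (Q : (κ → R) → R) : Prop :=
  ∀ z k a, Q (Function.update z k a) = Q z + (a - z k) * pd k Q z

theorem Aff.pd {R : Type} [CommRing R] {Q : (κ → R) → R} (h : Aff Q) (k : κ) : Aff (pd k Q) := by
  intro z l a
  by_cases hkl : l = k
  · subst hkl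
    simp [pd_apply]
  · have h1 := h (Function.update z k 1) l a
    have h0 := h (Function.update z k 0) l a
    rw [Function.update_of_ne hkl] at h1 h0
    have hc : WKS.pd l (WKS.pd k Q) z = WKS.pd k (WKS.pd l Q) z := by
      have := pd_comm (R := R) l k
      exact congrFun (congrArg (fun f => f Q) this) z
    rw [hc, pd_apply, pd_apply, pd_apply k, Function.update_comm hkl, Function.update_comm hkl, h1, h0]
    ring

theorem pd_pd_self {R : Type} [CommRing R] (k : κ) (Q : (κ → R) → R) : pd k (pd k Q) = 0 := by
  funext z; simp [pd_apply]

theorem Aff.sub {R : Type} [CommRing R] {Q Q' : (κ → R) → R} (h : Aff Q) (h' : Aff Q') :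
    Aff (Q - Q') := by
  intro z k a
  simp only [map_sub, Pi.sub_apply, h z k a, h' z k a]; ring

theorem Aff.smul {R : Type} [CommRing R] {Q : (κ → R) → R} (h : Aff Q) (c : R) :
    Aff (c • Q) := by
  intro z k a
  simp only [map_smul, Pi.smul_apply, h z k a, smul_eq_mul]; ring

/-- shift of coordinate `k` by `u` -/
def sh {R : Type} [CommRing R] (z : κ → R) (k : κ) (u : R) : κ → R :=
  Function.update z k (z k + u)

theorem Aff.sh {R : Type} [CommRing R] {Q : (κ → R) → R} (h : Aff Q) (z k u) :
    Q (sh z k u) = Q z + u * WKS.pd k Q z := by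
  rw [WKS.sh, h]; ring

theorem Aff.sh2 {R : Type} [CommRing R] {Q : (κ → R) → R} (h : Aff Q) (z : κ → R) (k l u v) :
    Q (WKS.sh (WKS.sh z k u) l v) = Q z + u * WKS.pd k Q z + v * WKS.pd l Q z
      + u * v * WKS.pd k (WKS.pd l Q) z := by
  rw [h.sh, h.sh, (h.pd l).sh]; ring

/-- real restriction of a complex function -/
def re (Q : (κ → ℂ) → ℂ) (x : κ → ℝ) : ℝ := (Q (fun k => (x k : ℂ))).re

theorem re_pd (Q : (κ → ℂ) → ℂ) (k : κ) : re (pd k Q) = pd k (re Q) := by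
  funext x
  simp only [re, pd_apply, Complex.sub_re]
  congr 4 <;> funext l <;> by_cases h : l = k <;> simp [h]

structure Good (Q : (κ → ℂ) → ℂ) : Prop where
  aff : Aff Q
  cont : Continuous Q
  stab : ∀ z : κ → ℂ, (∀ k, 0 < (z k).im) → Q z ≠ 0
  real : ∀ x : κ → ℝ, (Q (fun k => (x k : ℂ))).im = 0

theorem cont_pd {Q : (κ → ℂ) → ℂ} (h : Continuous Q) (k : κ) : Continuous (pd k Q) := by
  change Continuous fun z => Q (Function.update z k 1) - Q (Function.update z k 0)
  fun_prop

theorem real_pd {Q : (κ → ℂ) → ℂ} (h : ∀ x : κ → ℝ, (Q (fun k => (x k : ℂ))).im = 0) (k : κ)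
    (x : κ → ℝ) : (pd k Q (fun k => (x k : ℂ))).im = 0 := by
  have e : ∀ a : ℝ, Function.update (fun k => (x k : ℂ)) k (a : ℂ)
      = fun l => ((Function.update x k a l : ℝ) : ℂ) := by
    intro a; funext l; by_cases h : l = k <;> simp [h]
  have e1 := e 1; have e0 := e 0
  simp only [Complex.ofReal_one, Complex.ofReal_zero] at e1 e0
  rw [pd_apply, e1, e0, Complex.sub_im, h, h, sub_zero]

theorem Good.aff_re {Q : (κ → ℂ) → ℂ} (h : Good Q) : Aff (re Q) := by
  intro x k a
  have e : (fun l => ((Function.update x k a l : ℝ) : ℂ)) =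
    Function.update (fun k => (x k : ℂ)) k (a : ℂ) := by
    funext l; by_cases h : l = k <;> simp [h]
  rw [← re_pd]
  simp only [re]
  rw [e, h.aff, Complex.add_re, ← Complex.ofReal_sub, Complex.re_ofReal_mul]

theorem Good.herg {Q : (κ → ℂ) → ℂ} (h : Good Q) (k : κ) (z : κ → ℂ) (hz : ∀ k, 0 < (z k).im) :
    pd k Q z = 0 ∨ (pd k Q z / Q z).im < 0 := by
  by_cases hB : pd k Q z = 0
  · exact Or.inl hB
  right
  have hQ := h.stab z hz
  set B := pd k Q z with hBd
  have ha : Q (Function.update z k (z k - Q z / B)) = 0 := by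
    rw [h.aff, ← hBd]; field_simp; ring
  have hi : ¬ 0 < (z k - Q z / B).im := by
    intro hp
    refine h.stab _ ?_ ha
    intro l
    by_cases hl : l = k
    · subst hl; simpa using hp
    · simpa [hl] using hz l
  have h2 : 0 < (Q z / B).im := by
    rw [Complex.sub_im] at hi; have := hz k; linarith
  have h3 : B / Q z = (Q z / B)⁻¹ := by rw [inv_div]
  rw [h3, Complex.inv_im]
  apply div_neg_of_neg_of_pos (by linarith)
  rw [Complex.normSq_pos]
  exact div_ne_zero hQ hB

theorem im_div_eq (a b : ℂ) : (a * (starRingEnd ℂ) b).im = (a / b).im * Complex.normSq b := by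
  by_cases hb : b = 0
  · simp [hb]
  have : Complex.normSq b ≠ 0 := by simpa using hb
  rw [Complex.div_im, Complex.mul_im]
  simp; field_simp; ring

theorem Good.herg' {Q : (κ → ℂ) → ℂ} (h : Good Q) (k : κ) (z : κ → ℂ) (hz : ∀ k, 0 ≤ (z k).im) :
    (pd k Q z * (starRingEnd ℂ) (Q z)).im ≤ 0 := by
  let F : ℝ → ℝ := fun τ =>
    (pd k Q (fun l => z l + τ * Complex.I) * (starRingEnd ℂ) (Q (fun l => z l + τ * Complex.I))).im
  have hF : Continuous F := by
    have h1 := h.cont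
    have h2 := cont_pd h.cont k
    have h3 : Continuous (fun τ : ℝ => (fun l => z l + τ * Complex.I : κ → ℂ)) := by fun_prop
    exact Complex.continuous_im.comp ((h2.comp h3).mul (Complex.continuous_conj.comp (h1.comp h3)))
  have h0 : F 0 = (pd k Q z * (starRingEnd ℂ) (Q z)).im := by simp [F]
  rw [← h0]
  have hlim : Filter.Tendsto F (nhdsWithin 0 (Set.Ioi 0)) (nhds (F 0)) :=
    (hF.tendsto 0).mono_left nhdsWithin_le_nhds
  refine le_of_tendsto hlim ?_
  filter_upwards [self_mem_nhdsWithin] with τ hτ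
  have hp : ∀ l, 0 < (z l + τ * Complex.I).im := by
    intro l
    have : 0 < τ := hτ
    have := hz l
    simp; linarith
  simp only [F]
  rw [im_div_eq]
  rcases h.herg k _ hp with h1 | h1
  · rw [h1]; simp
  · exact mul_nonpos_of_nonpos_of_nonneg h1.le (Complex.normSq_nonneg _)

/-- first order operator -/
def op {R : Type} [CommRing R] (k l : κ) (c c' : R) : Module.End R ((κ → R) → R) :=
  1 - c • pd k - c' • pd l

theorem op_apply {R : Type} [CommRing R] (k l : κ) (c c' : R) (Q : (κ → R) → R) :
    op k l c c' Q = Q - c • pd k Q - c' • pd l Q := rfl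

theorem op_comm {R : Type} [CommRing R] (k l k' l' : κ) (c c' d d' : R) :
    Commute (op k l c c') (op k' l' d d') := by
  unfold op
  have h := fun a b => pd_comm (R := R) (κ := κ) a b
  have hh : ∀ a (e : R), Commute (1 - c • pd k - c' • pd l) (e • pd (R := R) a) := fun a e =>
    Commute.smul_right (Commute.sub_left (Commute.sub_left (Commute.one_left _)
      ((h _ _).smul_left _)) ((h _ _).smul_left _)) _
  exact Commute.sub_right (Commute.sub_right (Commute.one_right _) (hh _ _)) (hh _ _)

theorem re_op (Q : (κ → ℂ) → ℂ) (k l : κ) (c c' : ℝ) :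
    re (op k l (c : ℂ) (c' : ℂ) Q) = op k l c c' (re Q) := by
  funext x
  rw [op_apply, op_apply, ← re_pd, ← re_pd]
  simp only [re, Pi.sub_apply, Pi.smul_apply, smul_eq_mul, Complex.sub_re, Complex.re_ofReal_mul]

theorem Good.op {Q : (κ → ℂ) → ℂ} (h : Good Q) (k l : κ) {c c' : ℝ} (hc : 0 ≤ c) (hc' : 0 ≤ c') :
    Good (op k l (c : ℂ) (c' : ℂ) Q) := by
  rw [op_apply]
  refine ⟨(h.aff.sub ((h.aff.pd k).smul _)).sub ((h.aff.pd l).smul _), ?_, ?_, ?_⟩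
  · exact (h.cont.sub ((cont_pd h.cont k).const_smul _)).sub ((cont_pd h.cont l).const_smul _)
  · intro z hz h0
    have hQ := h.stab z hz
    have e : (1 : ℂ) - c * (pd k Q z / Q z) - c' * (pd l Q z / Q z) = 0 := by
      simp only [Pi.sub_apply, Pi.smul_apply, smul_eq_mul] at h0
      field_simp; linear_combination h0
    have him : c * (pd k Q z / Q z).im + c' * (pd l Q z / Q z).im = 0 := by
      have := congrArg Complex.im e
      simp only [Complex.sub_im, Complex.one_im, Complex.im_ofReal_mul, Complex.zero_im] at this
      linarith
    have key : ∀ (k : κ) (c : ℝ), 0 ≤ c → c * (pd k Q z / Q z).im ≤ 0 ∧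
        (c * (pd k Q z / Q z).im = 0 → (c : ℂ) * (pd k Q z / Q z) = 0) := by
      intro k c hc
      rcases h.herg k z hz with h1 | h1
      · simp [h1]
      · refine ⟨mul_nonpos_of_nonneg_of_nonpos hc h1.le, fun h2 => ?_⟩
        rcases mul_eq_zero.1 h2 with h3 | h3
        · simp [h3]
        · exact absurd h3 h1.ne
    have k1 := key k c hc
    have k2 := key l c' hc'
    rw [k1.2 (by linarith), k2.2 (by linarith)] at e
    simp at e
  · intro x
    simp only [Pi.sub_apply, Pi.smul_apply, smul_eq_mul, Complex.sub_im, Complex.im_ofReal_mul]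
    rw [h.real, real_pd h.real, real_pd h.real]; simp

/-- Positive on the real orthant above `x0`. -/
def Above (Q : (κ → ℝ) → ℝ) (x0 : κ → ℝ) : Prop := ∀ x, x0 ≤ x → 0 < Q x

theorem le_sh {x0 x : κ → ℝ} (h : x0 ≤ x) (k : κ) {u : ℝ} (hu : 0 ≤ u) : x0 ≤ sh x k u := by
  intro l
  have := h l
  by_cases hl : l = k
  · subst hl; simp [sh]; linarith
  · simp [sh, hl, this]

theorem slope_nonneg {a b : ℝ} (h : ∀ u : ℝ, 0 ≤ u → 0 < a + u * b) : 0 ≤ b := by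
  by_contra hb
  push Not at hb
  have ha := h 0 le_rfl
  have := h (a / (-b)) (by apply div_nonneg <;> linarith)
  have hb' : b ≠ 0 := hb.ne
  have e : a + a / (-b) * b = 0 := by field_simp; ring
  linarith

theorem slope_nonneg' {a b : ℝ} (h : ∀ u : ℝ, 0 ≤ u → 0 ≤ a + u * b) : 0 ≤ b :=
  slope_nonneg (a := a + 1) (fun u hu => by linarith [h u hu])

theorem Above.pd_nonneg {Q : (κ → ℝ) → ℝ} (ha : Aff Q) {x0 : κ → ℝ} (h : Above Q x0) (k : κ)
    {x : κ → ℝ} (hx : x0 ≤ x) : 0 ≤ pd k Q x := by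
  refine slope_nonneg (a := Q x) fun u hu => ?_
  rw [← ha.sh]; exact h _ (le_sh hx k hu)

theorem Above.pd2_nonneg {Q : (κ → ℝ) → ℝ} (ha : Aff Q) {x0 : κ → ℝ} (h : Above Q x0) (k l : κ)
    {x : κ → ℝ} (hx : x0 ≤ x) : 0 ≤ pd k (pd l Q) x := by
  refine slope_nonneg' (a := pd l Q x) fun u hu => ?_
  rw [← (ha.pd l).sh]; exact h.pd_nonneg ha _ (le_sh hx k hu)

/-- Rayleigh inequality -/
theorem Good.rayleigh {Q : (κ → ℂ) → ℂ} (h : Good Q) (k l : κ) (x : κ → ℝ) :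
    pd l (pd k (re Q)) x * re Q x ≤ pd k (re Q) x * pd l (re Q) x := by
  have hh := h.herg' k (sh (fun k => (x k : ℂ)) l Complex.I) (by
    intro j
    by_cases hl : j = l
    · subst hl; simp [sh]
    · simp [sh, hl])
  rw [(h.aff.pd k).sh, h.aff.sh] at hh
  have r1 := h.real x
  have r2 := real_pd h.real k x
  have r3 := real_pd h.real l x
  have r4 := real_pd (real_pd h.real k) l x
  rw [← re_pd, ← re_pd, ← re_pd]
  simp only [re]
  simp only [map_add, map_mul, Complex.mul_im, Complex.add_re, Complex.add_im, Complex.mul_re,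
    Complex.I_re, Complex.I_im, Complex.conj_re, Complex.conj_im, r1, r2, r3, r4] at hh
  linarith

theorem Good.mono1 {Q : (κ → ℂ) → ℂ} (h : Good Q) (k l : κ) (x : κ → ℝ) {u : ℝ} (hu : 0 ≤ u) :
    pd k (re Q) (sh x l u) * re Q x ≤ pd k (re Q) x * re Q (sh x l u) := by
  rw [(h.aff_re.pd k).sh, h.aff_re.sh]
  have := mul_le_mul_of_nonneg_left (h.rayleigh k l x) hu
  linarith

theorem Good.mono [Fintype κ] {Q : (κ → ℂ) → ℂ} (h : Good Q) (k : κ) {x0 x : κ → ℝ}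
    (hA : Above (re Q) x0) (hx : x0 ≤ x) :
    pd k (re Q) x * re Q x0 ≤ pd k (re Q) x0 * re Q x := by
  classical
  have key : ∀ s : Finset κ, pd k (re Q) (s.piecewise x x0) * re Q x0
      ≤ pd k (re Q) x0 * re Q (s.piecewise x x0) := by
    intro s
    induction s using Finset.induction_on with
    | empty => simp
    | insert l s hl ih =>
      have e : (insert l s).piecewise x x0 = sh (s.piecewise x x0) l (x l - x0 l) := by
        rw [Finset.piecewise_insert, sh]
        congr 1
        simp [hl]
      have hge : x0 ≤ s.piecewise x x0 := by
        intro j; by_cases hj : j ∈ s <;> simp [hj, hx j]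
      have hm := h.mono1 k l (s.piecewise x x0) (sub_nonneg.2 (hx l))
      rw [← e] at hm
      have hp := hA _ hge
      have hge' : x0 ≤ (insert l s).piecewise x x0 := by
        rw [e]; exact le_sh hge l (sub_nonneg.2 (hx l))
      have hp' := hA _ hge'
      have hp0 := hA _ le_rfl
      refine le_of_mul_le_mul_right ?_ hp
      calc _ = (pd k (re Q) ((insert l s).piecewise x x0) * re Q (s.piecewise x x0)) * re Q x0 := by
            ring
        _ ≤ (pd k (re Q) (s.piecewise x x0) * re Q ((insert l s).piecewise x x0)) * re Q x0 :=
            mul_le_mul_of_nonneg_right hm hp0.le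
        _ = (pd k (re Q) (s.piecewise x x0) * re Q x0) * re Q ((insert l s).piecewise x x0) := by
            ring
        _ ≤ (pd k (re Q) x0 * re Q (s.piecewise x x0)) * re Q ((insert l s).piecewise x x0) :=
            mul_le_mul_of_nonneg_right ih hp'.le
        _ = _ := by ring
  have := key Finset.univ
  simpa using this


theorem quad_facts {f0 f1 f2 g0 g1 g2 : ℝ} (h0 : 0 < f0) (h1 : 0 ≤ f1) (h2 : 0 ≤ f2)
    (hW : ∀ u : ℝ, (g1 + 2 * g2 * u) * (f0 + f1 * u + f2 * u ^ 2)
      ≤ (g0 + g1 * u + g2 * u ^ 2) * (f1 + 2 * f2 * u)) :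
    g2 * f0 - g0 * f2 ≤ 0 ∧ f1 * (g1 * f0 - g0 * f1) ≤ f0 * (g2 * f0 - g0 * f2) ∧
      g1 * f0 - g0 * f1 ≤ 0 := by
  obtain ⟨a, ha⟩ : ∃ a, a = g1 * f0 - g0 * f1 := ⟨_, rfl⟩
  obtain ⟨b, hb⟩ : ∃ b, b = g2 * f0 - g0 * f2 := ⟨_, rfl⟩
  obtain ⟨c, hc⟩ : ∃ c, c = g2 * f1 - g1 * f2 := ⟨_, rfl⟩
  have hq : ∀ u : ℝ, 0 ≤ (-c) * (u * u) + (-(2 * b)) * u + (-a) := by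
    intro u
    have := hW u
    rw [ha, hb, hc]
    nlinarith
  have hd := discrim_le_zero hq
  rw [discrim] at hd
  have ha0 : a ≤ 0 := by have := hq 0; linarith
  have hc0 : c ≤ 0 := by
    by_contra hcp
    push Not at hcp
    -- c > 0
    have e1 := hq ((|b| + |a| + c + 1) / c)
    set s := (|b| + |a| + c + 1) / c with hs
    have hcs : c * s = |b| + |a| + c + 1 := by rw [hs]; field_simp
    have q2 := hq (-s)
    have hs1 : 1 ≤ s := by
      rw [hs, le_div_iff₀ hcp]; have := abs_nonneg a; have := abs_nonneg b; linarith
    have h3 : c * s * s ≤ -a := by nlinarith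
    have h4 := neg_abs_le a
    have := abs_nonneg b
    have := abs_nonneg a
    nlinarith
  have hpl : f0 * c - f1 * b + f2 * a = 0 := by rw [ha, hb, hc]; ring
  have hbb : b ^ 2 ≤ a * c := by nlinarith
  have hb0 : b ≤ 0 := by
    by_contra hbp
    push Not at hbp
    have t1 : f0 * c ≤ 0 := mul_nonpos_of_nonneg_of_nonpos h0.le hc0
    have t2 : f2 * a ≤ 0 := mul_nonpos_of_nonneg_of_nonpos h2 ha0
    have t3 : 0 ≤ f1 * b := mul_nonneg h1 hbp.le
    have t4 : f0 * c = 0 := by linarith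
    have t5 : c = 0 := by
      rcases mul_eq_zero.1 t4 with h | h
      · exact absurd h h0.ne'
      · exact h
    rw [t5] at hbb
    nlinarith
  have hfin : f1 * a ≤ f0 * b := by
    rcases hb0.lt_or_eq with hbn | hbe
    · -- f0 b^2 ≤ f0 a c ≤ a (f0 c + f2 a) = a f1 b
      have s1 : f0 * b ^ 2 ≤ f0 * (a * c) := mul_le_mul_of_nonneg_left hbb h0.le
      have s2 : 0 ≤ f2 * (a * a) := mul_nonneg h2 (mul_self_nonneg a)
      have s3 : f0 * b ^ 2 ≤ a * f1 * b := by
        have : f1 * b = f0 * c + f2 * a := by linarith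
        calc f0 * b ^ 2 ≤ f0 * (a * c) + f2 * (a * a) := by linarith
          _ = a * (f0 * c + f2 * a) := by ring
          _ = a * (f1 * b) := by rw [this]
          _ = _ := by ring
      by_contra hcon
      push Not at hcon
      nlinarith
    · rw [hbe]; have := mul_nonpos_of_nonneg_of_nonpos h1 ha0; linarith
  rw [← ha, ← hb]
  exact ⟨hb0, hfin, ha0⟩

theorem barrier_real {f0 f1 f2 g0 g1 g2 δ φ : ℝ} (h0 : 0 < f0) (h1 : 0 ≤ f1) (h2 : 0 ≤ f2)
    (hW : ∀ u : ℝ, (g1 + 2 * g2 * u) * (f0 + f1 * u + f2 * u ^ 2)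
      ≤ (g0 + g1 * u + g2 * u ^ 2) * (f1 + 2 * f2 * u))
    (hδ : 0 < δ) (hφ : 1 ≤ (1 - φ) * δ) (hg : g0 ≤ φ * f0)
    (hF1 : f1 + 2 * f2 * δ ≤ φ * (f0 + f1 * δ + f2 * δ ^ 2)) :
    (g0 + g1 * δ + g2 * δ ^ 2) - (g1 + 2 * g2 * δ)
      ≤ φ * ((f0 + f1 * δ + f2 * δ ^ 2) - (f1 + 2 * f2 * δ)) := by
  obtain ⟨hb, hfin, ha⟩ := quad_facts h0 h1 h2 hW
  have hWδ := hW δ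
  have hF : 0 < f0 + f1 * δ + f2 * δ ^ 2 := by positivity
  have key : (g0 * (f1 * δ + f2 * δ ^ 2) * -1 + (g1 * δ + g2 * δ ^ 2) * f0)
      * (f0 + f1 * δ + f2 * δ ^ 2) ≤ δ * f0 * ((g1 + 2 * g2 * δ) * (f0 + f1 * δ + f2 * δ ^ 2)
        - (g0 + g1 * δ + g2 * δ ^ 2) * (f1 + 2 * f2 * δ)) := by
    have e1 : 0 ≤ δ ^ 2 * (f0 * (g2 * f0 - g0 * f2) - f1 * (g1 * f0 - g0 * f1)) :=
      mul_nonneg (by positivity) (by linarith)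
    have e2 : 0 ≤ δ ^ 3 * (2 * f2) * (-(g1 * f0 - g0 * f1)) :=
      mul_nonneg (by positivity) (by linarith)
    have e3 : 0 ≤ δ ^ 4 * f2 * (-(g2 * f0 - g0 * f2)) :=
      mul_nonneg (by positivity) (by linarith)
    nlinarith
  generalize hFd : f0 + f1 * δ + f2 * δ ^ 2 = F at *
  generalize hF1d : f1 + 2 * f2 * δ = F1 at *
  generalize hGd : g0 + g1 * δ + g2 * δ ^ 2 = G at *
  generalize hG1d : g1 + 2 * g2 * δ = G1 at *
  have key2 : (G * f0 - g0 * F) * F ≤ δ * f0 * (G1 * F - G * F1) := by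
    refine le_trans (le_of_eq ?_) key
    rw [← hGd, ← hFd]; ring
  have key3 : G * F ≤ δ * (G1 * F - G * F1) + φ * F ^ 2 := by
    refine le_of_mul_le_mul_left ?_ h0
    have : g0 * F ^ 2 ≤ φ * f0 * F ^ 2 := mul_le_mul_of_nonneg_right hg (by positivity)
    nlinarith
  have hdd : F ≤ δ * (F - F1) := by
    have h1 : δ * F1 ≤ δ * (φ * F) := mul_le_mul_of_nonneg_left hF1 hδ.le
    have h2 : 1 * F ≤ (1 - φ) * δ * F := mul_le_mul_of_nonneg_right hφ hF.le
    linarith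
  have hFF : 0 < F - F1 := by
    by_contra hcon
    push Not at hcon
    have := mul_nonpos_of_nonneg_of_nonpos hδ.le hcon
    linarith
  have fin1 : (G * F - φ * F ^ 2) * (F - F1) ≤ δ * (G1 * F - G * F1) * (F - F1) :=
    mul_le_mul_of_nonneg_right (by linarith) hFF.le
  have fin2 : (G1 * F - G * F1) * (δ * (F - F1) - F) ≤ 0 :=
    mul_nonpos_of_nonpos_of_nonneg (by linarith) (by linarith)
  have fin3 : (G - G1 - φ * (F - F1)) * F * F ≤ 0 := by nlinarith
  by_contra hcon
  push Not at hcon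
  have : 0 < (G - G1 - φ * (F - F1)) * F * F := by
    have : 0 < G - G1 - φ * (F - F1) := by linarith
    positivity
  linarith

section sel

variable {ι : Type} [DecidableEq ι] 

/-- derivative in direction of both copies -/
def DD (i : ι) (q : (ι × Bool → ℝ) → ℝ) (x : ι × Bool → ℝ) : ℝ :=
  pd (i, false) q x + pd (i, true) q x

def TT {R : Type} [CommRing R] (i : ι) : Module.End R ((ι × Bool → R) → R) :=
  op (i, false) (i, true) 1 1

theorem TT_re (i : ι) (Q : (ι × Bool → ℂ) → ℂ) : re (TT i Q) = TT i (re Q) := by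
  have := re_op Q (i, false) (i, true) 1 1
  simpa [TT] using this

theorem Good.TT {Q : (ι × Bool → ℂ) → ℂ} (h : Good Q) (i : ι) : Good (TT i Q) := by
  have := h.op (i, false) (i, true) zero_le_one zero_le_one
  simpa [WKS.TT] using this

theorem TT_apply (i : ι) (q : (ι × Bool → ℝ) → ℝ) (x) : TT i q x = q x - DD i q x := by
  simp [TT, op_apply, DD]; ring

def sh' (x : ι × Bool → ℝ) (j : ι) (u : ℝ) : ι × Bool → ℝ :=
  sh (sh x (j, false) u) (j, true) u

theorem sh'_eq (x : ι × Bool → ℝ) (j : ι) (u : ℝ) :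
    sh' x j u = fun k => x k + if k.1 = j then u else 0 := by
  funext ⟨i, b⟩
  cases b <;> by_cases h : i = j <;> simp [sh', sh, h, Function.update_apply]

theorem Good.barrier [Fintype ι] {Q : (ι × Bool → ℂ) → ℂ} (h : Good Q) {x0 : ι × Bool → ℝ}
    (hA : Above (re Q) x0) {δ φ : ℝ} (hδ : 0 < δ) (hφ : 1 ≤ (1 - φ) * δ) (j : ι)
    (hj : DD j (re Q) x0 ≤ φ * re Q x0) :
    Above (re (WKS.TT j Q)) (sh' x0 j δ) ∧
    ∀ i, DD i (re Q) x0 ≤ φ * re Q x0 →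
      DD i (re (WKS.TT j Q)) (sh' x0 j δ) ≤ φ * re (WKS.TT j Q) (sh' x0 j δ) := by
  set q := re Q with hq
  have haff := h.aff_re
  rw [← hq] at haff
  have hφ1 : φ < 1 := by
    by_contra hcon
    push Not at hcon
    have := mul_nonpos_of_nonpos_of_nonneg (by linarith : 1 - φ ≤ 0) hδ.le
    linarith
  have hq0 := hA x0 le_rfl
  have hmono : ∀ x, x0 ≤ x → DD j q x ≤ φ * q x := by
    intro x hx
    have m1 := h.mono (j, false) hA hx
    have m2 := h.mono (j, true) hA hx
    have hqx := hA x hx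
    refine le_of_mul_le_mul_right ?_ hq0
    calc DD j q x * q x0 ≤ DD j q x0 * q x := by simp only [DD]; linarith
      _ ≤ (φ * q x0) * q x := mul_le_mul_of_nonneg_right hj hqx.le
      _ = _ := by ring
  have hle : ∀ u, 0 ≤ u → x0 ≤ sh' x0 j u := fun u hu =>
    le_sh (le_sh le_rfl _ hu) _ hu
  constructor
  · intro x hx
    have hx' := (hle δ hδ.le).trans hx
    have hqx := hA x hx'
    rw [TT_re, TT_apply]
    have := hmono x hx'
    nlinarith
  · intro i hi
    have E : ∀ r : (ι × Bool → ℝ) → ℝ, Aff r → ∀ u, r (sh' x0 j u) = r x0 + DD j r x0 * u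
        + pd (j, false) (pd (j, true) r) x0 * u ^ 2 := by
      intro r hr u
      rw [sh', hr.sh2, DD]; ring
    have Ed : ∀ r : (ι × Bool → ℝ) → ℝ, Aff r → ∀ u, DD j r (sh' x0 j u) = DD j r x0
        + 2 * pd (j, false) (pd (j, true) r) x0 * u := by
      intro r hr u
      have hc : pd (j, true) (pd (j, false) r) = pd (j, false) (pd (j, true) r) :=
        congrArg (fun f => f r) (pd_comm (R := ℝ) (j, true) (j, false))
      simp only [DD]
      rw [sh', (hr.pd _).sh2, (hr.pd _).sh2, hc, pd_pd_self, pd_pd_self]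
      simp only [pd_pd_self, map_zero, Pi.zero_apply]
      ring
    have hga : Aff (DD i q) := by
      have : DD i q = pd (i, false) q - (-1 : ℝ) • pd (i, true) q := by
        funext x; simp [DD]
      rw [this]
      exact (haff.pd _).sub ((haff.pd _).smul _)
    have hDT : DD i (WKS.TT j q) (sh' x0 j δ) = DD i q (sh' x0 j δ) - DD j (DD i q) (sh' x0 j δ) := by
      have hc : ∀ a b, pd a (pd b q) = pd b (pd a q) := fun a b =>
        congrArg (fun f => f q) (pd_comm (R := ℝ) a b)
      have e1 : WKS.TT j q = q - pd (j, false) q - pd (j, true) q := by simp [WKS.TT, op_apply]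
      have e2 : DD i q = pd (i, false) q + pd (i, true) q := rfl
      rw [e1]
      simp only [DD]
      rw [e2]
      simp only [map_sub, map_add, Pi.sub_apply, Pi.add_apply]
      rw [hc (i, false) (j, false), hc (i, true) (j, false), hc (i, false) (j, true),
        hc (i, true) (j, true)]
      ring
    rw [TT_re, ← hq, hDT, TT_apply, E _ hga, Ed _ hga, E _ haff, Ed _ haff]
    refine barrier_real hq0 ?_ ?_ ?_ hδ hφ hi ?_
    · exact add_nonneg (hA.pd_nonneg haff _ le_rfl) (hA.pd_nonneg haff _ le_rfl)
    · exact hA.pd2_nonneg haff _ _ le_rfl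
    · intro u
      rw [← E _ hga, ← Ed _ hga, ← E _ haff, ← Ed _ haff]
      have R := fun k l => h.rayleigh k l (sh' x0 j u)
      rw [← hq] at R
      have e2 : DD i q = pd (i, false) q + pd (i, true) q := rfl
      have e3 : DD j (DD i q) (sh' x0 j u) =
          pd (j, false) (pd (i, false) q) (sh' x0 j u) + pd (j, false) (pd (i, true) q) (sh' x0 j u)
          + pd (j, true) (pd (i, false) q) (sh' x0 j u)
          + pd (j, true) (pd (i, true) q) (sh' x0 j u) := by
        rw [e2]; simp only [DD, map_add, Pi.add_apply]; ring
      rw [e3]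
      simp only [DD]
      have := R (i, false) (j, false)
      have := R (i, false) (j, true)
      have := R (i, true) (j, false)
      have := R (i, true) (j, true)
      linarith
    · rw [← E _ haff, ← Ed _ haff]; exact hmono _ (hle δ hδ.le)

/-- iterate the operators along a list -/
def TL {R : Type} [CommRing R] (L : List ι) : Module.End R ((ι × Bool → R) → R) :=
  (L.map TT).prod

theorem TL_cons {R : Type} [CommRing R] (i : ι) (L : List ι) (Q : (ι × Bool → R) → R) :
    TL (i :: L) Q = TT i (TL L Q) := by
  simp [TL]

theorem op_TL {R : Type} [CommRing R] (k l : ι × Bool) (c c' : R) (L : List ι) :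
    Commute (op k l c c') (TL L) := by
  apply Commute.list_prod_right
  intro x hx
  obtain ⟨i, -, rfl⟩ := List.mem_map.1 hx
  exact op_comm _ _ _ _ _ _ _ _

theorem TL_cons' {R : Type} [CommRing R] (i : ι) (L : List ι) (Q : (ι × Bool → R) → R) :
    TL (i :: L) Q = TL L (TT i Q) := by
  rw [TL_cons]
  exact congrArg (fun f => f Q) (op_TL (R := R) (i, false) (i, true) 1 1 L)

theorem Good.TL {Q : (ι × Bool → ℂ) → ℂ} (h : Good Q) (L : List ι) : Good (TL L Q) := by
  induction L with
  | nil => simpa [WKS.TL] using h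
  | cons i L ih => rw [TL_cons]; exact ih.TT i

theorem Good.barrier_list [Fintype ι] {δ φ : ℝ} (hδ : 0 < δ) (hφ : 1 ≤ (1 - φ) * δ) (L : List ι) :
    ∀ {Q : (ι × Bool → ℂ) → ℂ} (_ : Good Q) {x0 : ι × Bool → ℝ} (_ : Above (re Q) x0)
    (_ : ∀ i ∈ L, DD i (re Q) x0 ≤ φ * re Q x0),
    Above (re (WKS.TL L Q)) (fun k => x0 k + δ * L.count k.1) := by
  induction L with
  | nil =>
    intro Q h x0 hA _
    simpa [WKS.TL] using hA
  | cons j L ih =>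
    intro Q h x0 hA hB
    obtain ⟨h1, h2⟩ := h.barrier hA hδ hφ j (hB j (by simp))
    have := ih (h.TT j) h1 (fun i hi => h2 i (hB i (by simp [hi])))
    rw [TL_cons']
    convert this using 2 with k
    rw [sh'_eq, List.count_cons]
    by_cases hk : k.1 = j
    · simp [hk]; ring
    · have : ¬ j = k.1 := fun h => hk h.symm
      simp [hk, this]

theorem above_of_TT {q : (ι × Bool → ℝ) → ℝ} (haff : Aff q) {x0 : ι × Bool → ℝ} (i : ι)
    (hA : Above (TT i q) x0) : Above q x0 := by
  intro x hx
  have hT : Aff (TT i q) := by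
    rw [TT, op_apply]
    exact (haff.sub ((haff.pd _).smul _)).sub ((haff.pd _).smul _)
  have e1 : TT i q = q - pd (i, false) q - pd (i, true) q := by simp [TT, op_apply]
  have h1 := hA _ (le_sh (le_sh hx (i, false) zero_le_one) (i, true) zero_le_one)
  have h2 := hA.pd2_nonneg hT (i, false) (i, true) hx
  have hc : pd (i, true) (pd (i, false) q) = pd (i, false) (pd (i, true) q) :=
    congrArg (fun f => f q) (pd_comm (R := ℝ) (i, true) (i, false))
  rw [hT.sh2] at h1
  rw [e1] at h1 h2
  simp only [map_sub, Pi.sub_apply, hc, pd_pd_self, map_zero, Pi.zero_apply] at h1 h2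
  linarith

theorem Good.select [Fintype ι] (w : Bool → ℝ) (hw : ∀ b, 0 < w b)
    (hw1 : (w false)⁻¹ + (w true)⁻¹ = 1) (L : List ι) (hL : L.Nodup) :
    ∀ {Q : (ι × Bool → ℂ) → ℂ} (_ : Good Q) {x0 : ι × Bool → ℝ} (_ : Above (re (WKS.TL L Q)) x0),
    ∃ s : ι → Bool, Above (re Q) (fun k => x0 k - if k.1 ∈ L ∧ s k.1 = k.2 then w k.2 else 0) := by
  induction L with
  | nil =>
    intro Q h x0 hA
    refine ⟨fun _ => true, ?_⟩
    simpa [WKS.TL] using hA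
  | cons i L ih =>
    intro Q h x0 hA
    have hG := h.TL L
    rw [TL_cons, TT_re] at hA
    have hGA := above_of_TT hG.aff_re i hA
    set g := re (WKS.TL L Q) with hg
    have h0 := hA x0 le_rfl
    rw [TT_apply, DD] at h0
    have hg0 := hGA x0 le_rfl
    -- choose a side
    have hex : ∃ b, 0 < g x0 - w b * pd (i, b) g x0 := by
      by_contra hcon
      push Not at hcon
      have c1 := mul_nonpos_of_nonneg_of_nonpos (inv_nonneg.2 (hw false).le) (hcon false)
      have c2 := mul_nonpos_of_nonneg_of_nonpos (inv_nonneg.2 (hw true).le) (hcon true)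
      rw [mul_sub, ← mul_assoc, inv_mul_cancel₀ (hw _).ne'] at c1 c2
      have : g x0 = (w false)⁻¹ * g x0 + (w true)⁻¹ * g x0 := by rw [← add_mul, hw1, one_mul]
      linarith
    obtain ⟨b, hb⟩ := hex
    have hS : Good (WKS.op (i, b) (i, b) ((w b : ℝ) : ℂ) ((0 : ℝ) : ℂ) Q) :=
      h.op _ _ (hw b).le le_rfl
    have hSA : Above (re (WKS.TL L (WKS.op (i, b) (i, b) ((w b : ℝ) : ℂ) ((0 : ℝ) : ℂ) Q))) x0 := by
      have hc : WKS.TL L (WKS.op (i, b) (i, b) ((w b : ℝ) : ℂ) ((0 : ℝ) : ℂ) Q)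
          = WKS.op (i, b) (i, b) ((w b : ℝ) : ℂ) ((0 : ℝ) : ℂ) (WKS.TL L Q) :=
        (congrArg (fun f => f Q) (op_TL (R := ℂ) (i, b) (i, b) _ _ L)).symm
      rw [hc, re_op, ← hg]
      intro x hx
      have hm := hG.mono (i, b) hGA hx
      rw [← hg] at hm
      have hgx := hGA x hx
      simp only [op_apply, Pi.sub_apply, Pi.smul_apply, smul_eq_mul, zero_mul, sub_zero]
      have m2 := mul_le_mul_of_nonneg_left hm (hw b).le
      have m3 := mul_pos hb hgx
      have : 0 < (g x - w b * pd (i, b) g x) * g x0 := by nlinarith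
      exact pos_of_mul_pos_left this hg0.le
    obtain ⟨s, hs⟩ := ih hL.of_cons hS hSA
    refine ⟨Function.update s i b, ?_⟩
    have hni : i ∉ L := (List.nodup_cons.1 hL).1
    intro x hx
    have hx2 := hs (sh x (i, b) (w b)) (by
      intro k
      have := hx k
      by_cases hk : k = (i, b)
      · subst hk
        simp [hni, sh] at this ⊢
        linarith
      · rw [sh, Function.update_of_ne hk]
        refine le_trans ?_ this
        by_cases hki : k.1 = i
        · have hkb : ¬ b = k.2 := fun h => hk (Prod.ext hki h.symm)
          simp [hki, hni, hkb]
        · simp [hki])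
    rw [re_op] at hx2
    have hS2 : Aff (pd (i, b) (re Q)) := h.aff_re.pd _
    simp only [op_apply, Pi.sub_apply, Pi.smul_apply, smul_eq_mul, zero_mul, sub_zero] at hx2
    rw [h.aff_re.sh, hS2.sh, pd_pd_self] at hx2
    simpa using hx2

theorem Good.main [Fintype ι] {Q : (ι × Bool → ℂ) → ℂ} (h : Good Q)
    (hA : Above (re Q) 0) {δ φ : ℝ} (hδ : 0 < δ) (hφ : 1 ≤ (1 - φ) * δ)
    (hB : ∀ i, DD i (re Q) 0 ≤ φ * re Q 0)
    (w : Bool → ℝ) (hw : ∀ b, 0 < w b) (hw1 : (w false)⁻¹ + (w true)⁻¹ = 1) :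
    ∃ s : ι → Bool, Above (re Q) (fun k => δ - if s k.1 = k.2 then w k.2 else 0) := by
  have h1 := Good.barrier_list hδ hφ (Finset.univ : Finset ι).toList h hA (fun i _ => hB i)
  obtain ⟨s, hs⟩ := Good.select w hw hw1 _ (Finset.nodup_toList _) h h1
  refine ⟨s, ?_⟩
  convert hs using 2 with k
  rw [List.count_eq_one_of_mem (Finset.nodup_toList _) (by simp)]
  simp

end sel

end WKS
end WeaverKS


noncomputable section WeaverKS2
set_option linter.unusedSectionVars false
namespace WKS

open scoped ComplexOrder

section concrete
variable {n ι : Type} [Fintype n] [DecidableEq n] [Fintype ι] [DecidableEq ι]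

open scoped MatrixOrder in
theorem psd_of_path {M0 M1 : Matrix n n ℂ} (h0 : M0.IsHermitian) (h1 : M1.PosDef)
    (hd : ∀ u : ℝ, 0 ≤ u → u ≤ 1 → ((u : ℂ) • M0 + (1 - u : ℂ) • M1).det ≠ 0) :
    M0.PosSemidef := by
  obtain ⟨y, hy⟩ := CStarAlgebra.nonneg_iff_eq_star_mul_self.mp h1.posSemidef.nonneg
  have hyu : IsUnit y := by
    have := h1.isUnit
    rw [Matrix.isUnit_iff_isUnit_det] at this ⊢
    rw [hy, Matrix.det_mul] at this
    exact isUnit_of_mul_isUnit_right this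
  obtain ⟨Y, rfl⟩ := hyu
  set W : Matrix n n ℂ := ((Y⁻¹ : (Matrix n n ℂ)ˣ) : Matrix n n ℂ) with hW
  have hYW : (Y : Matrix n n ℂ) * W = 1 := by simp [hW]
  have hWY : W * (Y : Matrix n n ℂ) = 1 := by simp [hW]
  have hWu : IsUnit W := ⟨Y⁻¹, rfl⟩
  rw [← hWu.posSemidef_star_left_conjugate_iff]
  have hN : (star W * M0 * W).IsHermitian := isHermitian_conjTranspose_mul_mul W h0
  rw [hN.posSemidef_iff_eigenvalues_nonneg]
  intro j
  by_contra hneg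
  simp only [Pi.zero_apply, not_le] at hneg
  set ν := hN.eigenvalues j with hν
  have he := hN.mulVec_eigenvectorBasis j
  set e : n → ℂ := (hN.eigenvectorBasis j).ofLp with he'
  have he2 : (star W * M0 * W) *ᵥ e = (ν : ℂ) • e := he
  have hene : e ≠ 0 := by
    intro h
    have h2 := hN.eigenvectorBasis.orthonormal.1 j
    have : hN.eigenvectorBasis j = 0 := by
      ext i; exact congrFun h i
    rw [this] at h2; simp at h2
  have hv : W *ᵥ e ≠ 0 := by
    intro h
    apply hene
    have : (Y : Matrix n n ℂ) *ᵥ (W *ᵥ e) = e := by rw [mulVec_mulVec, hYW, one_mulVec]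
    rw [← this, h, mulVec_zero]
  have hM : M0 *ᵥ (W *ᵥ e) = (ν : ℂ) • (M1 *ᵥ (W *ᵥ e)) := by
    have h3 : star (Y : Matrix n n ℂ) * star W = 1 := by rw [← star_mul, hWY, star_one]
    have h4 : star (Y : Matrix n n ℂ) *ᵥ ((star W * M0 * W) *ᵥ e) = M0 *ᵥ (W *ᵥ e) := by
      rw [mulVec_mulVec, mulVec_mulVec, ← mul_assoc, ← mul_assoc, h3, one_mul]
    rw [← h4, he2, hy, mulVec_mulVec, mul_assoc, hYW, mul_one, mulVec_smul]
  have hpos : 0 < 1 - ν := by linarith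
  refine hd (1 - ν)⁻¹ (by positivity) (inv_le_one_of_one_le₀ (by linarith)) ?_
  rw [← Matrix.exists_mulVec_eq_zero_iff]
  refine ⟨W *ᵥ e, hv, ?_⟩
  rw [add_mulVec, smul_mulVec, smul_mulVec, hM, smul_smul, ← add_smul]
  have : (((1 - ν)⁻¹ : ℝ) : ℂ) * (ν : ℂ) + (1 - (((1 - ν)⁻¹ : ℝ) : ℂ)) = 0 := by
    have hc : (1 - (ν : ℂ)) ≠ 0 := by exact_mod_cast hpos.ne'
    push_cast
    field_simp
    ring
  rw [this, zero_smul]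

/-- The determinantal polynomial. -/
def qq (V : Matrix n ι ℂ) (ζ : ι → ℂ) : ℂ := (1 + Matrix.diagonal ζ * (Vᴴ * V)).det

theorem qq_eq (V : Matrix n ι ℂ) (ζ : ι → ℂ) :
    qq V ζ = (1 + V * Matrix.diagonal ζ * Vᴴ).det := by
  rw [qq, ← Matrix.mul_assoc, Matrix.det_one_add_mul_comm, ← Matrix.mul_assoc]

theorem qq_update (V : Matrix n ι ℂ) (ζ : ι → ℂ) (i : ι) (a : ℂ) :
    qq V (Function.update ζ i a) =
      ((1 + Matrix.diagonal ζ * (Vᴴ * V)).updateRow i (Pi.single i 1)).det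
        + a * ((1 + Matrix.diagonal ζ * (Vᴴ * V)).updateRow i ((Vᴴ * V) i)).det := by
  rw [← det_updateRow_smul, ← det_updateRow_add, qq]
  congr 1
  ext k l
  by_cases hk : k = i
  · subst hk
    simp [Matrix.diagonal_mul, Matrix.one_apply, Pi.single_apply, eq_comm]
  · simp [Matrix.diagonal_mul, Matrix.updateRow_apply, hk]

theorem qq_cont (V : Matrix n ι ℂ) : Continuous (qq V) := by
  unfold qq
  apply Continuous.matrix_det
  fun_prop

theorem qq_stab (V : Matrix n ι ℂ) (ζ : ι → ℂ) (h : ∀ i, 0 < (ζ i).im) : qq V ζ ≠ 0 := by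
  intro h0
  rw [qq, ← Matrix.exists_mulVec_eq_zero_iff] at h0
  obtain ⟨w, hw, hw0⟩ := h0
  rw [add_mulVec, one_mulVec, ← mulVec_mulVec] at hw0
  set g := (Vᴴ * V) *ᵥ w with hg
  have hi : ∀ i, w i + ζ i * g i = 0 := by
    intro i
    have := congrFun hw0 i
    simpa [mulVec_diagonal] using this
  have hz : ∀ i, ζ i ≠ 0 := fun i hc => by have := h i; rw [hc] at this; simp at this
  have hgi : ∀ i, g i = - (w i / ζ i) := by
    intro i
    have := hi i
    field_simp [hz i]
    linear_combination this
  have hpsd : 0 ≤ star w ⬝ᵥ g := (posSemidef_conjTranspose_mul_self V).dotProduct_mulVec_nonneg w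
  have him : (star w ⬝ᵥ g).im = 0 := (Complex.le_def.1 hpsd).2.symm
  have hsum : (star w ⬝ᵥ g).im = ∑ i, Complex.normSq (w i) * (ζ i).im / Complex.normSq (ζ i) := by
    rw [dotProduct, Complex.im_sum]
    refine Finset.sum_congr rfl fun i _ => ?_
    rw [hgi i]
    have : star w i * -(w i / ζ i) = -((Complex.normSq (w i) : ℂ) * (ζ i)⁻¹) := by
      rw [Complex.normSq_eq_conj_mul_self]; simp; ring
    rw [this]
    simp [Complex.inv_im]
    ring
  rw [hsum] at him
  rw [Finset.sum_eq_zero_iff_of_nonneg] at him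
  · apply hw
    funext i
    have := him i (Finset.mem_univ i)
    have h1 : Complex.normSq (ζ i) ≠ 0 := by simpa using hz i
    have h2 := (h i).ne'
    simpa [h1, h2, hz i] using this
  · intro i _
    have := h i
    have := Complex.normSq_nonneg (w i)
    have := Complex.normSq_nonneg (ζ i)
    positivity

theorem herm_cross (V : Matrix n ι ℂ) (x : ι → ℝ) :
    (1 + V * Matrix.diagonal (fun i => (x i : ℂ)) * Vᴴ).IsHermitian := by
  apply Matrix.isHermitian_one.add
  apply isHermitian_mul_mul_conjTranspose
  rw [Matrix.IsHermitian, Matrix.diagonal_conjTranspose]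
  congr 1
  funext i
  simp

theorem qq_real (V : Matrix n ι ℂ) (x : ι → ℝ) : (qq V (fun i => (x i : ℂ))).im = 0 := by
  rw [qq_eq]
  have := (herm_cross V x)
  have h2 := Matrix.det_conjTranspose (1 + V * Matrix.diagonal (fun i => (x i : ℂ)) * Vᴴ)
  rw [this.eq] at h2
  exact Complex.conj_eq_iff_im.1 h2.symm

theorem posDef_cross (V : Matrix n ι ℂ) (x : ι → ℝ) (hx : 0 ≤ x) :
    (1 + V * Matrix.diagonal (fun i => (x i : ℂ)) * Vᴴ).PosDef := by
  apply Matrix.PosDef.one.add_posSemidef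
  apply Matrix.PosSemidef.mul_mul_conjTranspose_same
  apply Matrix.PosSemidef.diagonal
  intro i
  have := hx i
  simpa using this

theorem qq_pos (V : Matrix n ι ℂ) (x : ι → ℝ) (hx : 0 ≤ x) :
    0 < (qq V (fun i => (x i : ℂ))).re := by
  rw [qq_eq]
  exact (Complex.lt_def.1 (posDef_cross V x hx).det_pos).1

theorem qq_zero (V : Matrix n ι ℂ) : qq V 0 = 1 := by
  simp [qq]

theorem qq_single (V : Matrix n ι ℂ) (i : ι) :
    qq V (Function.update 0 i 1) = 1 + (Vᴴ * V) i i := by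
  have h0 := qq_update V 0 i 0
  rw [qq_update]
  simp
  rw [show (Pi.single i (1:ℂ) : ι → ℂ) = (1 : Matrix ι ι ℂ) i by
    ext k; simp [Matrix.one_apply, Pi.single_apply, eq_comm]]
  rw [Matrix.updateRow_eq_self, Matrix.det_one]
  congr 1
  rw [← Matrix.cramer_transpose_apply]
  simp

/-- The product polynomial. -/
def QQ (V : Matrix n ι ℂ) (z : ι × Bool → ℂ) : ℂ :=
  qq V (fun i => z (i, false)) * qq V (fun i => z (i, true))

theorem upd_same {R : Type} (z : ι × Bool → R) (i : ι) (b : Bool) (a : R) :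
    (fun j => Function.update z (i, b) a (j, b)) = Function.update (fun j => z (j, b)) i a := by
  funext j
  by_cases h : j = i
  · subst h; simp
  · simp [Function.update_of_ne, h]

theorem upd_diff {R : Type} (z : ι × Bool → R) (i : ι) (b c : Bool) (hbc : c ≠ b) (a : R) :
    (fun j => Function.update z (i, b) a (j, c)) = (fun j => z (j, c)) := by
  funext j
  rw [Function.update_of_ne]
  intro h
  exact hbc (congrArg Prod.snd h)

theorem QQ_aff (V : Matrix n ι ℂ) : Aff (QQ V) := by
  rintro z ⟨i, b⟩ a
  have key : ∀ b : Bool, ∃ A B : ℂ, (∀ a, qq V (Function.update (fun j => z (j, b)) i a) = A + a * B)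
      ∧ qq V (fun j => z (j, b)) = A + z (i, b) * B := by
    intro b
    refine ⟨_, _, fun a => qq_update V _ i a, ?_⟩
    rw [← qq_update]
    simp
  rw [pd_apply]
  obtain ⟨A, B, h1, h2⟩ := key b
  cases b
  · simp only [QQ, upd_same, upd_diff z i false true (by simp), h1, h2]
    ring
  · simp only [QQ, upd_same, upd_diff z i true false (by simp), h1, h2]
    ring

theorem QQ_good (V : Matrix n ι ℂ) : Good (QQ V) where
  aff := QQ_aff V
  cont := by
    unfold QQ
    have := qq_cont V
    fun_prop
  stab z hz := mul_ne_zero (qq_stab V _ fun i => hz _) (qq_stab V _ fun i => hz _)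
  real x := by
    simp only [QQ, Complex.mul_im]
    rw [qq_real V (fun i => x (i, false)), qq_real V (fun i => x (i, true))]
    simp

theorem re_QQ (V : Matrix n ι ℂ) (x : ι × Bool → ℝ) :
    re (QQ V) x = (qq V (fun i => (x (i, false) : ℂ))).re * (qq V (fun i => (x (i, true) : ℂ))).re := by
  simp only [re, QQ, Complex.mul_re]
  rw [qq_real V (fun i => x (i, false)), qq_real V (fun i => x (i, true))]
  simp

theorem QQ_above (V : Matrix n ι ℂ) : Above (re (QQ V)) 0 := by
  intro x hx
  rw [re_QQ]
  exact mul_pos (qq_pos V _ fun i => hx _) (qq_pos V _ fun i => hx _)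

theorem QQ_zero (V : Matrix n ι ℂ) : re (QQ V) 0 = 1 := by
  have := qq_zero V
  rw [re_QQ]
  simp only [Pi.zero_apply, Complex.ofReal_zero]
  rw [show (fun _ : ι => (0 : ℂ)) = 0 from rfl, this]; simp

theorem QQ_pd_zero (V : Matrix n ι ℂ) (i : ι) (b : Bool) :
    pd (i, b) (re (QQ V)) 0 = ((Vᴴ * V) i i).re := by
  have e0 : (fun _ : ι => (0 : ℂ)) = 0 := rfl
  have hs := qq_single V i
  have hz := qq_zero V
  have cast : ∀ (a : ℝ) (c : Bool), (fun j => ((Function.update (0 : ι × Bool → ℝ) (i, b) a (j, c) : ℝ) : ℂ))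
      = if c = b then Function.update (0 : ι → ℂ) i (a : ℂ) else 0 := by
    intro a c
    split_ifs with h
    · subst h
      funext j
      by_cases hj : j = i
      · subst hj; simp
      · simp [Function.update_of_ne, hj]
    · funext j
      rw [Function.update_of_ne]
      · simp
      · intro h'; exact h (congrArg Prod.snd h')
  rw [pd_apply, re_QQ, re_QQ]
  simp only [cast]
  have hs' : qq V (Function.update 0 i ((1:ℝ):ℂ)) = 1 + (Vᴴ * V) i i := by simpa using hs
  have hs0 : qq V (Function.update 0 i ((0:ℝ):ℂ)) = 1 := by
    rw [← hz]; congr 1; funext j; by_cases hj : j = i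
    · subst hj; simp
    · simp [hj]
  cases b <;> simp only [hs', hs0, hz, if_true, if_false, reduceCtorEq] <;> simp

/-- Selection theorem in positive semidefinite form. -/
theorem selection (V : Matrix n ι ℂ) {δ φ : ℝ} (hδ : 0 < δ) (hφ : 1 ≤ (1 - φ) * δ)
    (hG : ∀ i, 2 * ((Vᴴ * V) i i).re ≤ φ) (w : Bool → ℝ) (hw : ∀ b, 0 < w b)
    (hw1 : (w false)⁻¹ + (w true)⁻¹ = 1) :
    ∃ s : ι → Bool, ∀ b : Bool,
      (1 + V * Matrix.diagonal (fun i => ((δ - if s i = b then w b else 0 : ℝ) : ℂ)) * Vᴴ).PosSemidef := by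
  obtain ⟨s, hs⟩ := (QQ_good V).main (QQ_above V) hδ hφ (by
    intro i
    rw [DD, QQ_pd_zero, QQ_pd_zero, QQ_zero]
    linarith [hG i]) w hw hw1
  refine ⟨s, fun b => ?_⟩
  set d : ι → ℝ := fun i => δ - if s i = b then w b else 0 with hd
  have hdle : ∀ i, d i ≤ δ := by
    intro i
    have := hw b
    simp only [hd]; split_ifs <;> linarith
  refine psd_of_path (M1 := 1 + V * Matrix.diagonal (fun _ : ι => ((δ : ℝ) : ℂ)) * Vᴴ)
    (herm_cross V d) (posDef_cross V (fun _ => δ) (fun _ => hδ.le)) ?_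
  intro u hu0 hu1
  have hcomb : ((u : ℂ) • (1 + V * Matrix.diagonal (fun i => ((d i : ℝ) : ℂ)) * Vᴴ)
      + (1 - u : ℂ) • (1 + V * Matrix.diagonal (fun _ : ι => ((δ : ℝ) : ℂ)) * Vᴴ))
      = 1 + V * Matrix.diagonal (fun i => ((u * d i + (1 - u) * δ : ℝ) : ℂ)) * Vᴴ := by
    have : Matrix.diagonal (fun i => ((u * d i + (1 - u) * δ : ℝ) : ℂ))
        = (u : ℂ) • Matrix.diagonal (fun i => ((d i : ℝ) : ℂ))
          + (1 - u : ℂ) • Matrix.diagonal (fun _ : ι => ((δ : ℝ) : ℂ)) := by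
      rw [← Matrix.diagonal_smul, ← Matrix.diagonal_smul, Matrix.diagonal_add]
      congr 1
      funext i
      simp
    rw [this, Matrix.mul_add, Matrix.add_mul, Matrix.mul_smul, Matrix.mul_smul, Matrix.smul_mul,
      Matrix.smul_mul]
    module
  refine (congrArg Matrix.det hcomb).trans_ne ?_
  rw [← qq_eq]
  have h := hs (fun k => if k.2 = b then u * d k.1 + (1 - u) * δ else δ) (by
    rintro ⟨i, c⟩
    simp only
    by_cases hc : c = b
    · subst hc
      simp only [if_true]
      change d i ≤ _
      nlinarith [hdle i]
    · simp only [hc, if_false]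
      have := hw c
      split_ifs <;> linarith)
  rw [re_QQ] at h
  intro h0
  cases b <;> simp only [if_true, if_false, reduceCtorEq, h0] at h <;> simp at h

end concrete
end WKS
end WeaverKS2

noncomputable section WeaverKS3
namespace WKS
open scoped ComplexOrder

theorem opNorm_le_of_psd {m : ℕ} {H : Matrix (Fin m) (Fin m) ℂ} (hH : H.IsHermitian) {β : ℝ}
    (hβ : 0 ≤ β)
    (h1 : ((β : ℂ) • (1 : Matrix (Fin m) (Fin m) ℂ) - H).PosSemidef)
    (h2 : ((β : ℂ) • (1 : Matrix (Fin m) (Fin m) ℂ) + H).PosSemidef) : opNorm H ≤ β := by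
  unfold opNorm
  have hsym : (Matrix.toEuclideanCLM (𝕜 := ℂ) H : EuclideanSpace ℂ (Fin m) →ₗ[ℂ] EuclideanSpace ℂ (Fin m)).IsSymmetric := by
    rw [← ContinuousLinearMap.isSelfAdjoint_iff_isSymmetric]
    rw [IsSelfAdjoint, ← map_star, star_eq_conjTranspose, hH.eq]
  rw [ContinuousLinearMap.norm_eq_iSup_rayleighQuotient _ hsym]
  apply ciSup_le
  intro x
  have hin : inner ℂ x (Matrix.toEuclideanCLM (𝕜 := ℂ) H x) = star x.ofLp ⬝ᵥ (H *ᵥ x.ofLp) := by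
    rw [EuclideanSpace.inner_eq_star_dotProduct, dotProduct_comm]; rfl
  have hxx : star x.ofLp ⬝ᵥ x.ofLp = ((‖x‖ ^ 2 : ℝ) : ℂ) := by
    have := inner_self_eq_norm_sq_to_K (𝕜 := ℂ) x
    rw [EuclideanSpace.inner_eq_star_dotProduct, dotProduct_comm] at this
    rw [this]; push_cast; rfl
  have e1 := (Complex.le_def.1 (h1.dotProduct_mulVec_nonneg x.ofLp)).1
  have e2 := (Complex.le_def.1 (h2.dotProduct_mulVec_nonneg x.ofLp)).1
  rw [sub_mulVec, smul_mulVec, one_mulVec, dotProduct_sub, dotProduct_smul, hxx, ← hin] at e1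
  rw [add_mulVec, smul_mulVec, one_mulVec, dotProduct_add, dotProduct_smul, hxx, ← hin] at e2
  have hre : (Matrix.toEuclideanCLM (𝕜 := ℂ) H).reApplyInnerSelf x
      = (inner ℂ x (Matrix.toEuclideanCLM (𝕜 := ℂ) H x)).re := by
    rw [ContinuousLinearMap.reApplyInnerSelf_apply, inner_re_symm]; rfl
  rw [ContinuousLinearMap.rayleighQuotient, hre, abs_div, abs_of_nonneg (sq_nonneg ‖x‖)]
  set r := (inner ℂ x (Matrix.toEuclideanCLM (𝕜 := ℂ) H x)).re with hr
  have e1' : 0 ≤ β * ‖x‖ ^ 2 - r := by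
    rw [Complex.sub_re, smul_eq_mul, ← Complex.ofReal_mul, Complex.ofReal_re] at e1
    simpa using e1
  have e2' : 0 ≤ β * ‖x‖ ^ 2 + r := by
    rw [Complex.add_re, smul_eq_mul, ← Complex.ofReal_mul, Complex.ofReal_re] at e2
    simpa using e2
  apply div_le_of_le_mul₀ (sq_nonneg _) hβ
  rw [abs_le]
  constructor <;> linarith

theorem diagProj_herm {m : ℕ} (S : Finset (Fin m)) : (diagProj S)ᴴ = diagProj S := by
  rw [diagProj, diagonal_conjTranspose]
  congr 1
  funext i
  by_cases h : i ∈ S <;> simp [h]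

theorem core {m : ℕ} {ε : ℝ} (hε : 0 < ε) (hε1 : ε ≤ 1) {P : Matrix (Fin m) (Fin m) ℂ}
    (hP : Pᴴ = P) (hPP : P * P = P) (S : Finset (Fin m)) (hS : ∀ i ∈ S, (P i i).re ≤ ε)
    {t : ℝ} (ht0 : 0 < t) (ht1 : t < 1) :
    ∃ S' : Finset (Fin m), S' ⊆ S ∧
      opNorm (P * diagProj S' * P - (t : ℂ) • (P * diagProj S * P)) ≤ 5 * √ε := by
  set l := √ε with hl
  have hl0 : 0 < l := Real.sqrt_pos.2 hε
  have hll : l * l = ε := Real.mul_self_sqrt hε.le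
  have hl1 : l ≤ 1 := by rw [hl]; exact Real.sqrt_le_one.2 hε1
  -- the parameters
  set δ : ℝ := 1 + 2 * l with hδ
  have hδ0 : 0 < δ := by positivity
  set c : ℝ := δ * l with hc
  have hc0 : 0 < c := by positivity
  set r : ℝ := (√c)⁻¹ with hr
  have hrr : r * r = c⁻¹ := by rw [hr, ← mul_inv, Real.mul_self_sqrt hc0.le]
  set V : Matrix (Fin m) (Fin m) ℂ := (r : ℂ) • (P * diagProj S) with hV
  have hVh : Vᴴ = (r : ℂ) • (diagProj S * P) := by
    rw [hV, conjTranspose_smul, conjTranspose_mul, hP, diagProj_herm]; simp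
  have hG : ∀ i, 2 * ((Vᴴ * V) i i).re ≤ 2 * ε * c⁻¹ := by
    intro i
    have e : Vᴴ * V = ((c⁻¹ : ℝ) : ℂ) • (diagProj S * P * diagProj S) := by
      rw [hVh, hV, smul_mul_smul_comm, ← Complex.ofReal_mul, hrr]
      congr 1
      rw [Matrix.mul_assoc, ← Matrix.mul_assoc P, hPP, Matrix.mul_assoc]
    rw [e, Matrix.smul_apply, diagProj, mul_diagonal, diagonal_mul]
    by_cases h : i ∈ S
    · have := hS i h
      simp only [h, if_true, one_mul, mul_one, smul_eq_mul, Complex.re_ofReal_mul]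
      have : c⁻¹ * (P i i).re ≤ c⁻¹ * ε := by gcongr
      linarith
    · simp [h]; positivity
  have hφ : 1 ≤ (1 - 2 * ε * c⁻¹) * δ := by
    rw [← hll, hc]
    have : (1 - 2 * (l * l) * (δ * l)⁻¹) * δ = δ - 2 * l := by field_simp
    rw [this, hδ]; linarith
  have ht1' : 0 < 1 - t := by linarith
  obtain ⟨s, hs⟩ := selection V hδ0 hφ hG (fun b => if b then (1 - t)⁻¹ else t⁻¹)
    (by intro b; cases b <;> simp <;> linarith) (by simp)
  set S' := S.filter (fun i => s i = false) with hS'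
  refine ⟨S', Finset.filter_subset _ _, ?_⟩
  set A := P * diagProj S * P with hA
  set X := P * diagProj S' * P with hX
  have hVD : ∀ x : Fin m → ℂ, V * diagonal x * Vᴴ
      = ((c⁻¹ : ℝ) : ℂ) • (P * (diagonal (fun i => if i ∈ S then x i else 0)) * P) := by
    intro x
    rw [hVh, hV, smul_mul_assoc, smul_mul_smul_comm, ← Complex.ofReal_mul, hrr]
    congr 1
    have : diagProj S * diagonal x * diagProj S = diagonal (fun i => if i ∈ S then x i else 0) := by
      rw [diagProj, diagonal_mul_diagonal, diagonal_mul_diagonal]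
      congr 1
      funext i
      by_cases h : i ∈ S <;> simp [h]
    rw [← this]
    simp only [Matrix.mul_assoc]
  have hcc : ((c : ℝ) : ℂ) ≠ 0 := by exact_mod_cast hc0.ne'
  have htc : ((t : ℝ) : ℂ) ≠ 0 := by exact_mod_cast ht0.ne'
  have htc' : (1 - (t : ℂ)) ≠ 0 := by exact_mod_cast ht1'.ne'
  have hAh : A.IsHermitian := by
    rw [IsHermitian, hA, conjTranspose_mul, conjTranspose_mul, hP, diagProj_herm, Matrix.mul_assoc]
  have hXh : X.IsHermitian := by
    rw [IsHermitian, hX, conjTranspose_mul, conjTranspose_mul, hP, diagProj_herm, Matrix.mul_assoc]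
  -- first half
  have hf : (((t * c : ℝ) : ℂ) • (1 : Matrix (Fin m) (Fin m) ℂ) + ((t * δ : ℝ) : ℂ) • A - X).PosSemidef := by
    have h := hs false
    rw [hVD] at h
    have e : P * (diagonal (fun i => if i ∈ S then
        ((δ - if s i = false then (if (false = true) then (1 - t)⁻¹ else t⁻¹) else 0 : ℝ) : ℂ) else 0)) * P
        = (δ : ℂ) • A - ((t⁻¹ : ℝ) : ℂ) • X := by
      have : (diagonal (fun i => if i ∈ S then
        ((δ - if s i = false then (if (false = true) then (1 - t)⁻¹ else t⁻¹) else 0 : ℝ) : ℂ) else 0))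
        = (δ : ℂ) • diagProj S - ((t⁻¹ : ℝ) : ℂ) • diagProj S' := by
        rw [diagProj, diagProj, ← diagonal_smul, ← diagonal_smul, diagonal_sub]
        congr 1
        funext i
        by_cases h : i ∈ S <;> by_cases h2 : s i = false <;> simp [h, h2, hS']
      rw [this, Matrix.mul_sub, Matrix.sub_mul, Matrix.mul_smul, Matrix.mul_smul, Matrix.smul_mul,
        Matrix.smul_mul]
    rw [e] at h
    have h3 := h.smul (a := ((t * c : ℝ) : ℂ)) (by exact_mod_cast (by positivity : (0:ℝ) ≤ t * c))
    convert h3 using 1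
    rw [smul_add, smul_smul, smul_sub, smul_smul, smul_smul]
    have a1 : ((t * c : ℝ) : ℂ) * ((c⁻¹ : ℝ) : ℂ) * (δ : ℂ) = ((t * δ : ℝ) : ℂ) := by
      push_cast; field_simp
    have a2 : ((t * c : ℝ) : ℂ) * ((c⁻¹ : ℝ) : ℂ) * ((t⁻¹ : ℝ) : ℂ) = 1 := by
      push_cast; field_simp
    rw [a1, a2, one_smul, add_sub_assoc]
  -- second half
  have hg : ((((1 - t) * c : ℝ) : ℂ) • (1 : Matrix (Fin m) (Fin m) ℂ)
      + (((1 - t) * δ : ℝ) : ℂ) • A - (A - X)).PosSemidef := by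
    have h := hs true
    rw [hVD] at h
    have e : P * (diagonal (fun i => if i ∈ S then
        ((δ - if s i = true then (if (true = true) then (1 - t)⁻¹ else t⁻¹) else 0 : ℝ) : ℂ) else 0)) * P
        = (δ : ℂ) • A - (((1 - t)⁻¹ : ℝ) : ℂ) • (A - X) := by
      have : (diagonal (fun i => if i ∈ S then
        ((δ - if s i = true then (if (true = true) then (1 - t)⁻¹ else t⁻¹) else 0 : ℝ) : ℂ) else 0))
        = (δ : ℂ) • diagProj S - (((1 - t)⁻¹ : ℝ) : ℂ) • (diagProj S - diagProj S') := by
        rw [diagProj, diagProj, diagonal_sub, ← diagonal_smul, ← diagonal_smul, diagonal_sub]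
        congr 1
        funext i
        by_cases h : i ∈ S <;> by_cases h2 : s i = false <;> simp [h, h2, hS']
      rw [this, Matrix.mul_sub, Matrix.sub_mul, Matrix.mul_smul, Matrix.mul_smul, Matrix.smul_mul,
        Matrix.smul_mul, Matrix.mul_sub, Matrix.sub_mul]
    rw [e] at h
    have h3 := h.smul (a := (((1 - t) * c : ℝ) : ℂ))
      (by exact_mod_cast (by positivity : (0:ℝ) ≤ (1 - t) * c))
    convert h3 using 1
    rw [smul_add, smul_smul, smul_sub, smul_smul, smul_smul]
    have a1 : (((1 - t) * c : ℝ) : ℂ) * ((c⁻¹ : ℝ) : ℂ) * (δ : ℂ) = (((1 - t) * δ : ℝ) : ℂ) := by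
      push_cast; field_simp
    have a2 : (((1 - t) * c : ℝ) : ℂ) * ((c⁻¹ : ℝ) : ℂ) * (((1 - t)⁻¹ : ℝ) : ℂ) = 1 := by
      push_cast; field_simp
    rw [a1, a2, one_smul, add_sub_assoc]
  have hA1 : (1 - A).PosSemidef := by
    have e : 1 - A = (1 - P)ᴴ * (1 - P) + Pᴴ * diagonal (fun i => if i ∈ S then (0 : ℂ) else 1) * P := by
      have : diagonal (fun i => if i ∈ S then (0 : ℂ) else 1) = 1 - diagProj S := by
        rw [diagProj, ← diagonal_one, diagonal_sub]
        congr 1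
        funext i
        by_cases h : i ∈ S <;> simp [h]
      rw [this, conjTranspose_sub, conjTranspose_one, hP, hA]
      noncomm_ring
      rw [hPP]
      abel
    rw [e]
    refine (posSemidef_conjTranspose_mul_self _).add (PosSemidef.conjTranspose_mul_mul_same ?_ _)
    apply PosSemidef.diagonal
    intro i
    by_cases h : i ∈ S <;> simp [h]
  have hone : ∀ a : ℝ, 0 ≤ a → (((a : ℝ) : ℂ) • (1 : Matrix (Fin m) (Fin m) ℂ)).PosSemidef :=
    fun a ha => PosSemidef.one.smul (by exact_mod_cast ha)
  have hbd : c + (δ - 1) ≤ 5 * l := by rw [hc, hδ]; nlinarith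
  have hpos : 0 ≤ c + (δ - 1) := by rw [hδ]; linarith
  apply opNorm_le_of_psd
  · apply hXh.sub
    rw [IsHermitian, conjTranspose_smul, hAh.eq]; simp
  · positivity
  · have h := (hf.add (hone (5 * l - t * (c + (δ - 1))) (by nlinarith))).add
      (hA1.smul (a := ((t * (δ - 1) : ℝ) : ℂ))
        (by exact_mod_cast (by rw [hδ]; ring_nf; positivity : (0:ℝ) ≤ t * (δ - 1))))
    convert h using 1
    push_cast
    module
  · have h := (hg.add (hone (5 * l - (1 - t) * (c + (δ - 1))) (by nlinarith))).add
      (hA1.smul (a := (((1 - t) * (δ - 1) : ℝ) : ℂ))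
        (by
          have : (0:ℝ) ≤ (1 - t) * (δ - 1) := mul_nonneg ht1'.le (by rw [hδ]; linarith)
          exact_mod_cast this))
    convert h using 1
    push_cast
    module

theorem diag_le_one {m : ℕ} {P : Matrix (Fin m) (Fin m) ℂ} (hP : Pᴴ = P) (hPP : P * P = P)
    (i : Fin m) : 0 ≤ (P i i).re ∧ (P i i).re ≤ 1 := by
  have h1 : P.PosSemidef := by
    have := posSemidef_conjTranspose_mul_self P
    rwa [hP, hPP] at this
  have h2 : (1 - P).PosSemidef := by
    have := posSemidef_conjTranspose_mul_self (1 - P)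
    rw [conjTranspose_sub, conjTranspose_one, hP] at this
    have e : (1 - P) * (1 - P) = 1 - P := by
      noncomm_ring
      rw [hPP]
      abel
    rwa [e] at this
  have e1 := (Complex.le_def.1 (h1.diag_nonneg (i := i))).1
  have e2 := (Complex.le_def.1 (h2.diag_nonneg (i := i))).1
  simp at e1 e2
  exact ⟨e1, e2⟩

theorem zero_case {m : ℕ} {P : Matrix (Fin m) (Fin m) ℂ} (hP : Pᴴ = P) (hPP : P * P = P)
    (S : Finset (Fin m)) (hS : ∀ i ∈ S, (P i i).re ≤ 0) : P * diagProj S * P = 0 := by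
  have h1 : P.PosSemidef := by
    have := posSemidef_conjTranspose_mul_self P
    rwa [hP, hPP] at this
  have hcol : ∀ i ∈ S, ∀ j, P j i = 0 := by
    intro i hi j
    have h0 : P i i = ∑ k, (Complex.normSq (P k i) : ℂ) := by
      conv_lhs => rw [← hPP]
      rw [Matrix.mul_apply]
      refine Finset.sum_congr rfl fun k _ => ?_
      rw [Complex.normSq_eq_conj_mul_self]
      congr 1
      exact (congrFun (congrFun hP i) k).symm
    have h2 : ∑ k, Complex.normSq (P k i) ≤ 0 := by
      have := hS i hi
      rw [h0] at this
      simpa using this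
    have h3 : Complex.normSq (P j i) ≤ 0 :=
      (Finset.single_le_sum (fun k _ => Complex.normSq_nonneg (P k i)) (Finset.mem_univ j)).trans h2
    exact Complex.normSq_eq_zero.1 (le_antisymm h3 (Complex.normSq_nonneg _))
  have : P * diagProj S = 0 := by
    ext j i
    rw [diagProj, mul_diagonal]
    by_cases h : i ∈ S <;> simp [h, hcol]
  rw [this, Matrix.zero_mul]

end WKS
end WeaverKS3

/-- There is a universal constant `C > 0` such that the following holds: if
`P ∈ M_m(ℂ)` is a projection matrix, `Q` is the diagonal projection with support
`S ⊆ {1, …, m}`, `t ∈ [0,1]`, and the diagonal entries of `QPQ` are each at most `ε`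
(i.e. `P i i ≤ ε` for `i ∈ S`), then there is a diagonal projection `Q' ≤ Q`
(i.e. with support `S' ⊆ S`) such that `‖PQ'P − t PQP‖ ≤ C ε^(1/4)`. -/
theorem stmt11 :
    ∃ C : ℝ, 0 < C ∧
      ∀ (m : ℕ) (ε : ℝ) (P : Matrix (Fin m) (Fin m) ℂ),
        Pᴴ = P → P * P = P →
        ∀ S : Finset (Fin m),
          (∀ i ∈ S, (P i i).re ≤ ε) →
          ∀ t : ℝ, 0 ≤ t → t ≤ 1 →
            ∃ S' : Finset (Fin m), S' ⊆ S ∧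
              opNorm (P * diagProj S' * P - (t : ℂ) • (P * diagProj S * P))
                ≤ C * ε ^ ((1 : ℝ) / 4) := by
  refine ⟨5, by norm_num, ?_⟩
  intro m ε P hP hPP S hS t ht0 ht1
  have hR : 0 ≤ ε ^ ((1 : ℝ) / 4) := by
    rcases le_or_gt 0 ε with h | h
    · exact Real.rpow_nonneg h _
    · rw [Real.rpow_def_of_neg h]
      apply mul_nonneg (Real.exp_nonneg _)
      apply Real.cos_nonneg_of_mem_Icc
      constructor <;> linarith [Real.pi_pos]
  have hz : opNorm (0 : Matrix (Fin m) (Fin m) ℂ) = 0 := by simp [opNorm]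
  have hR5 : 0 ≤ 5 * ε ^ ((1 : ℝ) / 4) := by positivity
  rcases le_or_gt ε 0 with hε | hε
  · have h0 := WKS.zero_case hP hPP S (fun i hi => (hS i hi).trans hε)
    refine ⟨S, subset_rfl, ?_⟩
    rw [h0, smul_zero, sub_zero, hz]
    exact hR5
  rcases ht0.eq_or_lt with rfl | ht0
  · refine ⟨∅, Finset.empty_subset _, ?_⟩
    have : P * diagProj ∅ * P - ((0 : ℝ) : ℂ) • (P * diagProj S * P) = 0 := by
      simp [diagProj]
    rw [this, hz]
    exact hR5
  rcases ht1.eq_or_lt with rfl | ht1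
  · refine ⟨S, subset_rfl, ?_⟩
    have : P * diagProj S * P - ((1 : ℝ) : ℂ) • (P * diagProj S * P) = 0 := by simp
    rw [this, hz]
    exact hR5
  have hm : 0 < min ε 1 := lt_min hε one_pos
  obtain ⟨S', h1, h2⟩ := WKS.core hm (min_le_right _ _) hP hPP S
    (fun i hi => le_min (hS i hi) (WKS.diag_le_one hP hPP i).2) ht0 ht1
  refine ⟨S', h1, h2.trans ?_⟩
  have h3 : √(min ε 1) ≤ ε ^ ((1 : ℝ) / 4) := by
    rw [Real.sqrt_eq_rpow]
    calc (min ε 1) ^ ((1 : ℝ) / 2) ≤ (min ε 1) ^ ((1 : ℝ) / 4) :=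
          Real.rpow_le_rpow_of_exponent_ge hm (min_le_right _ _) (by norm_num)
      _ ≤ ε ^ ((1 : ℝ) / 4) := Real.rpow_le_rpow hm.le (min_le_left _ _) (by norm_num)
  linarith
end
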